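/- arXiv:1910.09539 — 3 statements merged into one kernel-verified Lean document; each statement's English description precedes it below -/
import Mathlib

section
/- Let H be any Hermitian matrix on ℂ^(2^(N/2)), L(A) := i[H, A], O₀ a matrix with (O₀|O₀) = 1, O(t) := e^{iHt} O₀ e^{−iHt}, and P_s(t) := (O(t)| Q_s O(t)) for 0 ≤ s ≤ N. For 0 ≤ s < s′ ≤ N set 𝒦_{s′s} := ‖Q_{s′} ∘ L ∘ Q_s‖ (the operator norm induced by ‖·‖). Then there exist functions K_{s′s} : ℝ → ℝ with |K_{s′s}(t)| ≤ 𝒦_{s′s} for all t, such that for every s and every t, the derivative of P_s satisfies P_s′(t) = 2·√(P_s(t))·( Σ_{s′ < s} K_{s s′}(t)·√(P_{s′}(t)) − Σ_{s′ > s} K_{s′ s}(t)·√(P_{s′}(t)) ). -/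
open Matrix

/-- The ordered product `ψ_Y = ∏_{i ∈ Y} ψ_i` (indices in increasing order), with `ψ_∅ = 1`. -/
noncomputable def psiProd {N : ℕ} (ψ : Fin N → Matrix (Fin (2 ^ (N / 2))) (Fin (2 ^ (N / 2))) ℂ)
    (Y : Finset (Fin N)) : Matrix (Fin (2 ^ (N / 2))) (Fin (2 ^ (N / 2))) ℂ :=
  ((Y.sort (· ≤ ·)).map ψ).prod

/-- The inner product `(A|B) := 2^(−N/2) · tr(A† B)`. -/
noncomputable def mInner (N : ℕ) (A B : Matrix (Fin (2 ^ (N / 2))) (Fin (2 ^ (N / 2))) ℂ) : ℂ :=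
  ((2 : ℂ) ^ (N / 2))⁻¹ * (Aᴴ * B).trace

/-- The norm `‖A‖ := √(A|A)`. -/
noncomputable def mNorm (N : ℕ) (A : Matrix (Fin (2 ^ (N / 2))) (Fin (2 ^ (N / 2))) ℂ) : ℝ :=
  Real.sqrt (mInner N A A).re

/-- The operator norm (induced by `mNorm`) of a linear map on the matrix algebra. -/
noncomputable def opNorm (N : ℕ)
    (T : Matrix (Fin (2 ^ (N / 2))) (Fin (2 ^ (N / 2))) ℂ →ₗ[ℂ]
      Matrix (Fin (2 ^ (N / 2))) (Fin (2 ^ (N / 2))) ℂ) : ℝ :=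
  sSup {r : ℝ | ∃ A, A ≠ 0 ∧ r = mNorm N (T A) / mNorm N A}

/-- The span of `{ψ_Y : |Y| = s}`, i.e. the space of operators of size `s`. -/
noncomputable def sizeSpan {N : ℕ} (ψ : Fin N → Matrix (Fin (2 ^ (N / 2))) (Fin (2 ^ (N / 2))) ℂ)
    (s : ℕ) : Submodule ℂ (Matrix (Fin (2 ^ (N / 2))) (Fin (2 ^ (N / 2))) ℂ) :=
  Submodule.span ℂ {M | ∃ Y : Finset (Fin N), Y.card = s ∧ M = psiProd ψ Y}

/-- The Liouvillian `L(A) := i[H, A]`. -/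
noncomputable def liou {N : ℕ} (H : Matrix (Fin (2 ^ (N / 2))) (Fin (2 ^ (N / 2))) ℂ) :
    Matrix (Fin (2 ^ (N / 2))) (Fin (2 ^ (N / 2))) ℂ →ₗ[ℂ]
      Matrix (Fin (2 ^ (N / 2))) (Fin (2 ^ (N / 2))) ℂ :=
  Complex.I • (LinearMap.mulLeft ℂ H - LinearMap.mulRight ℂ H)

/-- Heisenberg evolution `O(t) := e^{iHt} O₀ e^{−iHt}`. -/
noncomputable def heis {N : ℕ} (H O₀ : Matrix (Fin (2 ^ (N / 2))) (Fin (2 ^ (N / 2))) ℂ)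
    (t : ℝ) : Matrix (Fin (2 ^ (N / 2))) (Fin (2 ^ (N / 2))) ℂ :=
  NormedSpace.exp ((Complex.I * t) • H) * O₀ * NormedSpace.exp ((-(Complex.I * t)) • H)

/-!
Since `N` is even, the products `ψ_Y` form an orthonormal basis of the matrix algebra, so the
projections `Q_s` resolve the identity. The Liouvillian `L` is skew-adjoint, hence
`P_s' = 2 Re (Q_s O | L O) = 2 ∑_{s'} F_{ss'}` with the antisymmetric probability flow
`F_{ss'} = Re (Q_s O | L Q_{s'} O)`. As `√P_s = ‖Q_s O‖`, dividing `F_{ss'}` by `√P_s √P_{s'}` gives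
the rates `K_{ss'}`, which Cauchy-Schwarz bounds by `‖Q_s L Q_{s'}‖`.
-/

section QuantumWalk

open RCLike
open scoped InnerProductSpace

variable {𝕜 E ι : Type*} [RCLike 𝕜] [NormedAddCommGroup E] [InnerProductSpace 𝕜 E]

/-- The matrix element of `L` between the components of `x` in `U` and in `W`, normalized by their
lengths; these are the coefficients `K` of the quantum walk. Division by zero makes it `0` when one
of the two components vanishes. -/
noncomputable def transitionRate (L : E →L[𝕜] E) (x : E) (U W : Submodule 𝕜 E)
    [U.HasOrthogonalProjection] [W.HasOrthogonalProjection] : ℝ :=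
  re ⟪U.starProjection x, L (W.starProjection x)⟫_𝕜 /
    (‖U.starProjection x‖ * ‖W.starProjection x‖)

section Rate

variable (L : E →L[𝕜] E) (x : E) (U W : Submodule 𝕜 E)
  [U.HasOrthogonalProjection] [W.HasOrthogonalProjection]

theorem norm_mul_transitionRate_mul_norm :
    ‖U.starProjection x‖ * (transitionRate L x U W * ‖W.starProjection x‖) =
      re ⟪U.starProjection x, L (W.starProjection x)⟫_𝕜 := by
  rcases eq_or_ne (U.starProjection x) 0 with hU | hU
  · simp [hU]
  rcases eq_or_ne (W.starProjection x) 0 with hW | hW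
  · simp [hW]
  have hU' := norm_ne_zero_iff.2 hU
  have hW' := norm_ne_zero_iff.2 hW
  rw [transitionRate]
  field_simp

theorem abs_transitionRate_le :
    |transitionRate L x U W| ≤ ‖U.starProjection ∘L L ∘L W.starProjection‖ := by
  set T := U.starProjection ∘L L ∘L W.starProjection with hT
  have hcompress : ⟪U.starProjection x, L (W.starProjection x)⟫_𝕜 =
      ⟪U.starProjection x, T (W.starProjection x)⟫_𝕜 := by
    simp only [hT, ContinuousLinearMap.comp_apply, ← U.inner_starProjection_left_eq_right,
      Submodule.starProjection_eq_self_iff.2 (Submodule.starProjection_apply_mem _ x)]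
  have hnonneg : 0 ≤ ‖U.starProjection x‖ * ‖W.starProjection x‖ := by positivity
  rw [transitionRate, abs_div, hcompress, abs_of_nonneg hnonneg]
  refine div_le_of_le_mul₀ hnonneg (norm_nonneg T) ?_
  calc |re ⟪U.starProjection x, T (W.starProjection x)⟫_𝕜|
      ≤ ‖U.starProjection x‖ * ‖T (W.starProjection x)‖ :=
        (abs_re_le_norm _).trans (norm_inner_le_norm _ _)
    _ ≤ ‖U.starProjection x‖ * (‖T‖ * ‖W.starProjection x‖) := by gcongr; exact T.le_opNorm _
    _ = ‖T‖ * (‖U.starProjection x‖ * ‖W.starProjection x‖) := by ring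

end Rate

theorem sum_eq_sum_lt_sub_sum_gt {G : Type*} [AddCommGroup G] [IsAddTorsionFree G] [LinearOrder ι]
    {F : ι → ι → G} (hF : ∀ i j, F i j = -F j i) (S : Finset ι) (i : ι) :
    ∑ j ∈ S, F i j = ∑ j ∈ S with j < i, F i j - ∑ j ∈ S with i < j, F j i := by
  rw [Finset.sum_filter, Finset.sum_filter, ← Finset.sum_sub_distrib]
  refine Finset.sum_congr rfl fun j _ => ?_
  rcases lt_trichotomy j i with h | rfl | h
  · simp [h, h.not_gt]
  · simpa using self_eq_neg.1 (hF j j)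
  · simp [h, h.not_gt, hF i j]

theorem hasDerivAt_re_inner_starProjection [NormedSpace ℝ E] [IsScalarTower ℝ 𝕜 E]
    (U : Submodule 𝕜 E) [U.HasOrthogonalProjection] {f : ℝ → E} {f' : E} {t : ℝ}
    (hf : HasDerivAt f f' t) :
    HasDerivAt (fun τ => re ⟪f τ, U.starProjection (f τ)⟫_𝕜)
      (2 * re ⟪U.starProjection (f t), f'⟫_𝕜) t := by
  have hP : HasDerivAt (fun τ => U.starProjection (f τ)) (U.starProjection f') t :=
    (U.starProjection.restrictScalars ℝ).hasFDerivAt.comp_hasDerivAt t hf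
  have hre := (reCLM (K := 𝕜)).hasFDerivAt.comp_hasDerivAt t (hf.inner 𝕜 hP)
  refine hre.congr_deriv ?_
  rw [reCLM_apply, map_add, ← U.inner_starProjection_left_eq_right, inner_re_symm f', ← two_mul]

theorem size_distribution_quantum_walk_general [NormedSpace ℝ E] [IsScalarTower ℝ 𝕜 E]
    [LinearOrder ι] {S : Finset ι} {V : ι → Submodule 𝕜 E} [∀ i, (V i).HasOrthogonalProjection]
    (hV : ∀ x, ∑ i ∈ S, (V i).starProjection x = x) {L : ℝ → E →L[𝕜] E}
    (hL : ∀ t x y, ⟪L t x, y⟫_𝕜 = -⟪x, L t y⟫_𝕜) {f : ℝ → E}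
    (hf : ∀ t, HasDerivAt f (L t (f t)) t) :
    ∃ K : ι → ι → ℝ → ℝ,
      (∀ i j t, |K i j t| ≤ ‖(V i).starProjection ∘L L t ∘L (V j).starProjection‖) ∧
      ∀ i t, HasDerivAt (fun τ => re ⟪f τ, (V i).starProjection (f τ)⟫_𝕜)
        (2 * √(re ⟪f t, (V i).starProjection (f t)⟫_𝕜) *
          (∑ j ∈ S with j < i, K i j t * √(re ⟪f t, (V j).starProjection (f t)⟫_𝕜) -
            ∑ j ∈ S with i < j, K j i t * √(re ⟪f t, (V j).starProjection (f t)⟫_𝕜))) t := by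
  refine ⟨fun i j t => transitionRate (L t) (f t) (V i) (V j),
    fun i j t => abs_transitionRate_le .., fun i t => ?_⟩
  have hsqrt (j) : √(re ⟪f t, (V j).starProjection (f t)⟫_𝕜) = ‖(V j).starProjection (f t)‖ := by
    rw [← (V j).inner_starProjection_left_eq_right, Submodule.re_inner_starProjection_eq_normSq,
      Real.sqrt_sq (norm_nonneg _)]
    rfl
  let F (i j : ι) : ℝ := re ⟪(V i).starProjection (f t), L t ((V j).starProjection (f t))⟫_𝕜
  have hF (i j) : F i j = -F j i := by
    rw [← map_neg, ← hL, inner_re_symm]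
  refine (hasDerivAt_re_inner_starProjection (V i) (hf t)).congr_deriv ?_
  simp only [hsqrt]
  calc 2 * re ⟪(V i).starProjection (f t), L t (f t)⟫_𝕜
      = 2 * ∑ j ∈ S, F i j := by
        simp only [F, ← map_sum, ← inner_sum, hV]
    _ = 2 * (∑ j ∈ S with j < i, F i j - ∑ j ∈ S with i < j, F j i) := by
        rw [sum_eq_sum_lt_sub_sum_gt hF]
    _ = _ := by
        simp only [F, ← norm_mul_transitionRate_mul_norm, mul_assoc, mul_sub, Finset.mul_sum]
        congr! 3
        ring

end QuantumWalk

theorem hasDerivAt_exp_smul_mul_mul_exp_smul_neg {𝕂 𝔸 : Type*} [RCLike 𝕂] [NormedRing 𝔸]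
    [NormedAlgebra 𝕂 𝔸] [NormedAlgebra ℚ 𝔸] [CompleteSpace 𝔸] (X A : 𝔸) (t : 𝕂) :
    HasDerivAt (fun u : 𝕂 => NormedSpace.exp (u • X) * A * NormedSpace.exp (u • -X))
      ⁅X, NormedSpace.exp (t • X) * A * NormedSpace.exp (t • -X)⁆ t := by
  refine (((hasDerivAt_exp_smul_const' X t).mul_const A).mul
    (hasDerivAt_exp_smul_const (-X) t)).congr_deriv ?_
  rw [Ring.lie_def]
  noncomm_ring

section NormalizedTrace

variable {N : ℕ}

local notation "𝓜" => Matrix (Fin (2 ^ (N / 2))) (Fin (2 ^ (N / 2))) ℂ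

theorem liou_apply (H A : 𝓜) : liou H A = ⁅Complex.I • H, A⁆ := by
  simp [liou, Ring.lie_def, smul_sub]

theorem hasDerivAt_heis (H O₀ : 𝓜) (t : ℝ) :
    HasDerivAt (heis H O₀) (liou H (heis H O₀ t)) t := by
  open scoped Matrix.Norms.Operator in
  have hsmul (u : ℝ) : (Complex.I * u) • H = u • Complex.I • H := by
    rw [mul_comm, mul_smul, Complex.coe_smul]
  have hheis : heis H O₀ = fun u : ℝ => NormedSpace.exp (u • Complex.I • H) * O₀ *
      NormedSpace.exp (u • -(Complex.I • H)) := by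
    funext u
    rw [heis, neg_smul, hsmul, smul_neg]
  rw [hheis, liou_apply]
  exact hasDerivAt_exp_smul_mul_mul_exp_smul_neg (Complex.I • H) O₀ t

theorem mInner_self_re (A : 𝓜) :
    (mInner N A A).re = (2 ^ (N / 2))⁻¹ * ∑ j, ∑ i, ‖A i j‖ ^ 2 := by
  have hreal : mInner N A A = ((2 ^ (N / 2))⁻¹ * ∑ j, ∑ i, ‖A i j‖ ^ 2 : ℝ) := by
    simp [mInner, Matrix.trace, Matrix.mul_apply, Complex.conj_mul']
  rw [hreal, Complex.ofReal_re]

theorem mInner_liou_left {H : 𝓜} (hH : H.IsHermitian) (A B : 𝓜) :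
    mInner N (liou H A) B = -mInner N A (liou H B) := by
  have hcycle : (Aᴴ * (B * H)).trace = (H * (Aᴴ * B)).trace := by
    rw [← Matrix.mul_assoc, Matrix.trace_mul_comm]
  simp [mInner, liou, hH.eq, Matrix.mul_assoc, Matrix.sub_mul, Matrix.mul_sub, hcycle]

variable (N) in
open scoped ComplexOrder in
/-- The inner product axioms of `mInner`. -/
noncomputable abbrev mInnerCore : InnerProductSpace.Core ℂ 𝓜 where
  inner := mInner N
  conj_inner_symm A B := by
    have htrace : (Aᴴ * B).trace = star (Bᴴ * A).trace := by
      rw [← Matrix.trace_conjTranspose, Matrix.conjTranspose_mul,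
        Matrix.conjTranspose_conjTranspose]
    simp only [mInner, htrace, map_mul, map_inv₀, map_pow, map_ofNat]
    rfl
  re_inner_nonneg A := by
    rw [RCLike.re_eq_complex_re, mInner_self_re]
    positivity
  add_left A B C := by simp [mInner, Matrix.add_mul, mul_add]
  smul_left A B r := by simp [mInner, mul_left_comm]
  definite A h := by
    have htrace : ((2 : ℂ) ^ (N / 2))⁻¹ * (Aᴴ * A).trace = 0 := h
    exact Matrix.trace_conjTranspose_mul_self_eq_zero_iff.1
      ((mul_eq_zero.1 htrace).resolve_left (by simp))

theorem continuous_mInner_self : Continuous fun A => mInner N A A := by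
  unfold mInner
  fun_prop

theorem norm_apply_sq_le (A : 𝓜) (i j) : ‖A i j‖ ^ 2 ≤ 2 ^ (N / 2) * (mInner N A A).re := by
  rw [mInner_self_re, mul_inv_cancel_left₀ (by positivity)]
  exact (Finset.single_le_sum (f := fun i => ‖A i j‖ ^ 2) (fun _ _ => by positivity)
      (Finset.mem_univ i)).trans
    (Finset.single_le_sum (f := fun j => ∑ i, ‖A i j‖ ^ 2) (fun _ _ => by positivity)
    (Finset.mem_univ j))

theorem isVonNBounded_mInner_ball : Bornology.IsVonNBounded ℂ {A : 𝓜 | (mInner N A A).re < 1} := by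
  refine Bornology.isVonNBounded_pi_iff.2 fun i => Bornology.isVonNBounded_pi_iff.2 fun j => ?_
  rw [NormedSpace.isVonNBounded_iff, isBounded_iff_forall_norm_le]
  refine ⟨√(2 ^ (N / 2)), ?_⟩
  rintro _ ⟨_, ⟨A, hA, rfl⟩, rfl⟩
  refine Real.le_sqrt_of_sq_le ((norm_apply_sq_le A i j).trans ?_)
  exact mul_le_of_le_one_right (by positivity) (le_of_lt hA)

variable (N) in
/-- The norm `mNorm` on the matrix algebra. Its topology is replaced by the product topology of
matrices, so that derivatives for either agree definitionally. -/
@[reducible] noncomputable def mNormedAddCommGroup : NormedAddCommGroup 𝓜 :=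
  (mInnerCore N).toNormedAddCommGroupOfTopology continuous_mInner_self.continuousAt
    isVonNBounded_mInner_ball

attribute [local instance] mNormedAddCommGroup

variable (N) in
/-- The inner product `mInner` on the matrix algebra, compatible with `mNormedAddCommGroup`. -/
@[reducible] noncomputable def mInnerProductSpace : InnerProductSpace ℂ 𝓜 :=
  .ofCoreOfTopology (mInnerCore N) continuous_mInner_self.continuousAt
    isVonNBounded_mInner_ball

attribute [local instance] mInnerProductSpace

theorem opNorm_toLinearMap (T : 𝓜 →L[ℂ] 𝓜) : opNorm N T = ‖T‖ := by
  have hle : ∀ r ∈ {r : ℝ | ∃ A, A ≠ 0 ∧ r = mNorm N (T A) / mNorm N A}, r ≤ ‖T‖ := by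
    rintro _ ⟨A, -, rfl⟩
    exact T.ratio_le_opNorm A
  refine le_antisymm (Real.sSup_le hle (norm_nonneg T)) ?_
  refine T.opNorm_le_bound' (Real.sSup_nonneg ?_) fun A hA => ?_
  · rintro _ ⟨A, -, rfl⟩
    exact div_nonneg (norm_nonneg (T A)) (norm_nonneg A)
  · rw [← div_le_iff₀ (by positivity)]
    exact le_csSup ⟨_, hle⟩ ⟨A, norm_ne_zero_iff.1 hA, rfl⟩

end NormalizedTrace

theorem sum_starProjection_span_fiber {𝕜 E ι κ : Type*} [RCLike 𝕜] [NormedAddCommGroup E]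
    [InnerProductSpace 𝕜 E] {v : κ → E} (hv : Pairwise fun k l => inner 𝕜 (v k) (v l) = 0)
    {d : κ → ι} {S : Finset ι} (hd : ∀ k, d k ∈ S) {V : ι → Submodule 𝕜 E}
    [∀ i, (V i).HasOrthogonalProjection]
    (hV : ∀ i, V i = Submodule.span 𝕜 (v '' {k | d k = i})) {x : E}
    (hx : x ∈ Submodule.span 𝕜 (Set.range v)) : ∑ i ∈ S, (V i).starProjection x = x := by
  have hmem (k : κ) : v k ∈ V (d k) := by
    rw [hV]
    exact Submodule.subset_span ⟨k, rfl, rfl⟩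
  have horth (k : κ) {i : ι} (hi : i ≠ d k) : v k ∈ (V i)ᗮ := by
    rw [hV, Submodule.mem_orthogonal']
    intro w hw
    induction hw using Submodule.span_induction with
    | mem w hw =>
      obtain ⟨l, rfl, rfl⟩ := hw
      exact hv fun h => hi (h ▸ rfl)
    | zero => exact inner_zero_right _
    | add w z _ _ hw hz => rw [inner_add_right, hw, hz, add_zero]
    | smul c w _ hw => rw [inner_smul_right, hw, mul_zero]
  induction hx using Submodule.span_induction with
  | mem x hx =>
    obtain ⟨k, rfl⟩ := hx
    rw [Finset.sum_eq_single_of_mem (d k) (hd k) fun i _ hi =>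
      (V i).starProjection_apply_eq_zero_iff.2 (horth k hi)]
    exact Submodule.starProjection_eq_self_iff.2 (hmem k)
  | zero => simp
  | add x y _ _ hx hy => simp only [map_add, Finset.sum_add_distrib, hx, hy]
  | smul c x _ hx => simp only [map_smul, ← Finset.smul_sum, hx]

theorem trace_eq_zero_of_anticommute {n R : Type*} [Fintype n] [DecidableEq n] [CommRing R]
    [IsAddTorsionFree R] {U A : Matrix n n R} (hU : U * U = 1)
    (hA : U * A = -(A * U)) : A.trace = 0 := by
  have hneg : A.trace = -A.trace := calc
    A.trace = (U * (U * A)).trace := by rw [← Matrix.mul_assoc, hU, Matrix.one_mul]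
    _ = -(A * U * U).trace := by
      rw [hA, Matrix.mul_neg, Matrix.trace_neg, Matrix.trace_mul_comm]
    _ = -A.trace := by rw [Matrix.mul_assoc, hU, Matrix.mul_one]
  exact self_eq_neg.1 hneg

/- Moving `(ψ_Y)ᴴ ψ_Z` past `ψ_i` changes its sign this number of times, up to an even number. -/
theorem exists_odd_card_add_card_add_ite {ι : Type*} [Fintype ι] [DecidableEq ι]
    (hι : Even (Fintype.card ι)) {Y Z : Finset ι} (h : Y ≠ Z) :
    ∃ i, Odd (Y.card + Z.card + ((if i ∈ Y then 1 else 0) + if i ∈ Z then 1 else 0)) := by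
  by_contra! hcon
  simp only [Nat.not_odd_iff_even] at hcon
  rcases Nat.even_or_odd (Y.card + Z.card) with heven | hodd
  · refine h (Finset.ext fun i => ?_)
    have hi := (Nat.even_add.1 (hcon i)).1 heven
    by_cases hY : i ∈ Y <;> by_cases hZ : i ∈ Z <;> simp_all
  · have hcompl : Z = Yᶜ := Finset.ext fun i => by
      have hi := mt (Nat.even_add.1 (hcon i)).2 (Nat.not_even_iff_odd.2 hodd)
      by_cases hY : i ∈ Y <;> by_cases hZ : i ∈ Z <;> simp_all
    rw [hcompl, Finset.card_add_card_compl] at hodd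
    exact Nat.not_odd_iff_even.2 hι hodd

/-- A family of Majorana operators in a star ring: self-adjoint square roots of `1` that pairwise
anticommute. Splitting the anticommutation relation into its diagonal and off-diagonal parts keeps
the definition free of scalars. -/
structure IsMajoranaFamily {ι R : Type*} [Ring R] [StarRing R] (ψ : ι → R) : Prop where
  isSelfAdjoint : ∀ i, IsSelfAdjoint (ψ i)
  mul_self : ∀ i, ψ i * ψ i = 1
  anticommute : Pairwise fun i j => ψ i * ψ j = -(ψ j * ψ i)

namespace IsMajoranaFamily

section StarRing

variable {ι R : Type*} [Ring R] [StarRing R] {ψ : ι → R}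

theorem of_anticommutator [DecidableEq ι] [Algebra ℂ R] (hψ : ∀ i, IsSelfAdjoint (ψ i))
    (hanti : ∀ i j, ψ i * ψ j + ψ j * ψ i = (if i = j then (2 : ℂ) else 0) • (1 : R)) :
    IsMajoranaFamily ψ where
  isSelfAdjoint := hψ
  mul_self i := by
    have h := hanti i i
    rw [if_pos rfl, ← two_smul ℂ] at h
    exact smul_right_injective R (two_ne_zero' ℂ) h
  anticommute i j hij := by
    have h := hanti i j
    rw [if_neg hij, zero_smul] at h
    exact eq_neg_of_add_eq_zero_left h

theorem mul_list_prod [DecidableEq ι] (hψ : IsMajoranaFamily ψ) (i : ι) (l : List ι) :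
    ψ i * (l.map ψ).prod = (-1) ^ (l.length + l.count i) * ((l.map ψ).prod * ψ i) := by
  induction l with
  | nil => simp
  | cons j l ih =>
    rw [List.map_cons, List.prod_cons, List.length_cons]
    rcases eq_or_ne i j with rfl | hij
    · have hsign : (-1 : R) ^ (l.length + 1 + (l.count i + 1)) = (-1) ^ (l.length + l.count i) := by
        rw [add_add_add_comm, pow_add, one_add_one_eq_two, neg_one_sq, mul_one]
      rw [List.count_cons_self, hsign, mul_assoc (ψ i) _ (ψ i), ih]
      rcases neg_one_pow_eq_or R (l.length + l.count i) with h | h <;> simp [h]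
    · calc ψ i * (ψ j * (l.map ψ).prod)
          = -(ψ j * (ψ i * (l.map ψ).prod)) := by
            rw [← mul_assoc, hψ.anticommute hij, neg_mul, mul_assoc]
        _ = _ := by
            rw [ih, List.count_cons_of_ne hij.symm, add_right_comm, pow_succ']
            rcases neg_one_pow_eq_or R (l.length + l.count i) with h | h <;> simp [h, mul_assoc]

theorem list_prod_mem_unitary (hψ : IsMajoranaFamily ψ) (l : List ι) :
    (l.map ψ).prod ∈ unitary R := by
  refine list_prod_mem fun x hx => ?_
  obtain ⟨i, -, rfl⟩ := List.mem_map.1 hx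
  rw [Unitary.mem_iff, (hψ.isSelfAdjoint i).star_eq]
  exact ⟨hψ.mul_self i, hψ.mul_self i⟩

theorem star_list_prod (hψ : IsMajoranaFamily ψ) (l : List ι) :
    star (l.map ψ).prod = (l.reverse.map ψ).prod := by
  induction l with
  | nil => simp
  | cons i l ih => simp [ih, (hψ.isSelfAdjoint i).star_eq]

end StarRing

theorem trace_list_prod_eq_zero {ι n R : Type*} [DecidableEq ι] [Fintype n] [DecidableEq n]
    [CommRing R] [StarRing R] [IsAddTorsionFree R] {ψ : ι → Matrix n n R}
    (hψ : IsMajoranaFamily ψ) {l : List ι} {i : ι} (hl : Odd (l.length + l.count i)) :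
    (l.map ψ).prod.trace = 0 := by
  refine trace_eq_zero_of_anticommute (hψ.mul_self i) ?_
  rw [hψ.mul_list_prod, hl.neg_one_pow, neg_one_mul]

section psiProd

variable {N : ℕ} {ψ : Fin N → Matrix (Fin (2 ^ (N / 2))) (Fin (2 ^ (N / 2))) ℂ}

theorem mInner_psiProd_self (hψ : IsMajoranaFamily ψ) (Y : Finset (Fin N)) :
    mInner N (psiProd ψ Y) (psiProd ψ Y) = 1 := by
  rw [mInner, psiProd, ← Matrix.star_eq_conjTranspose,
    Unitary.star_mul_self_of_mem (hψ.list_prod_mem_unitary _)]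
  simp

theorem mInner_psiProd_of_ne (hψ : IsMajoranaFamily ψ) (hN : Even N) {Y Z : Finset (Fin N)}
    (h : Y ≠ Z) : mInner N (psiProd ψ Y) (psiProd ψ Z) = 0 := by
  obtain ⟨i, hi⟩ := exists_odd_card_add_card_add_ite (by rwa [Fintype.card_fin]) h
  have hprod : (psiProd ψ Y)ᴴ * psiProd ψ Z =
      (((Y.sort (· ≤ ·)).reverse ++ Z.sort (· ≤ ·)).map ψ).prod := by
    rw [psiProd, psiProd, ← Matrix.star_eq_conjTranspose, hψ.star_list_prod, List.map_append,
      List.prod_append]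
  rw [mInner, hprod, hψ.trace_list_prod_eq_zero (i := i), mul_zero]
  simpa [List.Nodup.count (Finset.sort_nodup _ _)] using hi

attribute [local instance] mNormedAddCommGroup mInnerProductSpace

theorem orthonormal_psiProd (hψ : IsMajoranaFamily ψ) (hN : Even N) :
    Orthonormal ℂ (psiProd ψ) :=
  orthonormal_iff_ite.2 fun Y Z => by
    split_ifs with h
    · exact h ▸ hψ.mInner_psiProd_self Y
    · exact hψ.mInner_psiProd_of_ne hN h

theorem span_range_psiProd (hψ : IsMajoranaFamily ψ) (hN : Even N) :
    Submodule.span ℂ (Set.range (psiProd ψ)) = ⊤ := by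
  refine (hψ.orthonormal_psiProd hN).linearIndependent.span_eq_top_of_card_eq_finrank' ?_
  rw [Fintype.card_finset, Fintype.card_fin, Module.finrank_matrix, Fintype.card_fin,
    Module.finrank_self, mul_one, ← pow_add, ← two_mul, Nat.two_mul_div_two_of_even hN]

theorem sum_starProjection_sizeSpan (hψ : IsMajoranaFamily ψ) (hN : Even N)
    (A : Matrix (Fin (2 ^ (N / 2))) (Fin (2 ^ (N / 2))) ℂ) :
    ∑ s ∈ Finset.range (N + 1), (sizeSpan ψ s).starProjection A = A := by
  refine sum_starProjection_span_fiber (d := Finset.card) (hψ.orthonormal_psiProd hN).2 ?_ ?_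
    (hψ.span_range_psiProd hN ▸ Submodule.mem_top)
  · exact fun Y => Finset.mem_range_succ_iff.2 (card_finset_fin_le Y)
  · simp [sizeSpan, Set.image, eq_comm]

end psiProd

end IsMajoranaFamily

/-- The size probabilities obey a continuous-time quantum walk with transition rates bounded
by `𝒦_{s′s} := ‖Q_{s′} ∘ L ∘ Q_s‖`. -/
theorem size_distribution_quantum_walk {N : ℕ} (hNpos : 0 < N) (hNeven : Even N)
    (ψ : Fin N → Matrix (Fin (2 ^ (N / 2))) (Fin (2 ^ (N / 2))) ℂ)
    (hherm : ∀ i, (ψ i).IsHermitian)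
    (hanti : ∀ i j, ψ i * ψ j + ψ j * ψ i =
      (if i = j then (2 : ℂ) else 0) • (1 : Matrix (Fin (2 ^ (N / 2))) (Fin (2 ^ (N / 2))) ℂ))
    -- `Qs s` is the orthogonal projection onto the span of `{ψ_Y : |Y| = s}`:
    (Qs : ℕ → (Matrix (Fin (2 ^ (N / 2))) (Fin (2 ^ (N / 2))) ℂ →ₗ[ℂ]
      Matrix (Fin (2 ^ (N / 2))) (Fin (2 ^ (N / 2))) ℂ))
    (hQmem : ∀ s A, Qs s A ∈ sizeSpan ψ s)
    (hQorth : ∀ s A, ∀ B ∈ sizeSpan ψ s, mInner N B (A - Qs s A) = 0)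
    (H O₀ : Matrix (Fin (2 ^ (N / 2))) (Fin (2 ^ (N / 2))) ℂ)
    (hH : H.IsHermitian) (hO₀ : mInner N O₀ O₀ = 1) :
    ∃ K : ℕ → ℕ → ℝ → ℝ,
      (∀ s s' : ℕ, s < s' → s' ≤ N → ∀ t : ℝ,
        |K s' s t| ≤ opNorm N (Qs s' ∘ₗ liou H ∘ₗ Qs s)) ∧
      (∀ s ≤ N, ∀ t : ℝ,
        HasDerivAt (fun τ : ℝ => (mInner N (heis H O₀ τ) (Qs s (heis H O₀ τ))).re)
          (2 * Real.sqrt (mInner N (heis H O₀ t) (Qs s (heis H O₀ t))).re *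
            ((∑ s' ∈ Finset.range s,
                K s s' t * Real.sqrt (mInner N (heis H O₀ t) (Qs s' (heis H O₀ t))).re) -
             (∑ s' ∈ Finset.Ioc s N,
                K s' s t * Real.sqrt (mInner N (heis H O₀ t) (Qs s' (heis H O₀ t))).re))) t) := by
  let _ := mNormedAddCommGroup N
  let _ := mInnerProductSpace N
  have hψ : IsMajoranaFamily ψ := .of_anticommutator hherm hanti
  obtain rfl : Qs = fun s => (sizeSpan ψ s).starProjection.toLinearMap := by
    funext s
    ext1 A
    exact (Submodule.eq_starProjection_of_mem_orthogonal (hQmem s A) (hQorth s A)).symm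
  obtain ⟨K, hbound, hderiv⟩ := size_distribution_quantum_walk_general
    (L := fun _ => LinearMap.toContinuousLinearMap (liou H))
    (hψ.sum_starProjection_sizeSpan hNeven) (fun _ => mInner_liou_left hH) (hasDerivAt_heis H O₀)
  refine ⟨K, fun s s' _ _ t => (hbound s' s t).trans_eq (opNorm_toLinearMap _).symm,
    fun s _ t => ?_⟩
  have hlt : {j ∈ Finset.range (N + 1) | j < s} = Finset.range s := by grind
  have hgt : {j ∈ Finset.range (N + 1) | s < j} = Finset.Ioc s N := by grind
  have hs_deriv := hderiv s t
  rw [hlt, hgt] at hs_deriv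
  exact hs_deriv
end

section
/- Let W be a finite-dimensional complex inner product space, let {Q_s}_{s∈S} be a finite family of pairwise orthogonal projections (Q_s Q_{s′} = 0 for s ≠ s′), let R and R′ be disjoint subsets of S, and set Q_R := Σ_{s∈R} Q_s and Q_{R′} := Σ_{s′∈R′} Q_{s′}. Then for any linear map L on W, the operator norm satisfies ‖Q_{R′} L Q_R‖ ≤ max( max_{s∈R} Σ_{s′∈R′} ‖Q_{s′} L Q_s‖ , max_{s′∈R′} Σ_{s∈R} ‖Q_{s′} L Q_s‖ ). -/
/-!
Testing `Q_{R'} L Q_R` against unit vectors `x` and `y`, each block contributes at most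
`‖Q_{s'} L Q_s‖ ‖Q_s x‖ ‖Q_{s'} y‖`. The Schur test bounds the sum of these terms by the geometric
mean of the largest row sum and the largest column sum of the matrix of block norms, since
`∑ s, ‖Q_s x‖ ^ 2 ≤ ‖x‖ ^ 2` by orthogonality of the projections. The geometric mean is at most the
maximum.
-/

open scoped InnerProductSpace

theorem le_ciSup_finset_mem {ι α : Type*} [ConditionallyCompleteLattice α] (f : ι → α)
    {s : Finset ι} {i : ι} (hi : i ∈ s) : f i ≤ ⨆ j ∈ s, f j := by
  have hbdd : BddAbove (⋃ j, Set.range fun _ : j ∈ s => f j) := by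
    refine ((s.finite_toSet.image f).subset ?_).bddAbove
    rintro _ ⟨_, ⟨j, rfl⟩, ⟨hj, rfl⟩⟩
    exact ⟨j, hj, rfl⟩
  exact le_ciSup₂ (f := fun j (_ : j ∈ s) => f j) hbdd i hi

theorem iSup_finset_mem_nonneg {ι : Type*} {f : ι → ℝ} {s : Finset ι}
    (hf : ∀ i ∈ s, 0 ≤ f i) : 0 ≤ ⨆ i ∈ s, f i :=
  Real.iSup_nonneg fun i => Real.iSup_nonneg (hf i)

theorem sqrt_mul_le_max {x y : ℝ} (hx : 0 ≤ x) : √(x * y) ≤ max x y := by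
  refine Real.sqrt_le_iff.2 ⟨le_max_of_le_left hx, ?_⟩
  calc x * y ≤ x * max x y := by gcongr; exact le_max_right x y
    _ ≤ max x y * max x y := by gcongr; exact le_max_left x y
    _ = max x y ^ 2 := (sq _).symm

section SchurTest

variable {ι κ R : Type*} {s : Finset ι} {t : Finset κ}

theorem sum_sum_mul_le_of_sum_le [Semiring R] [PartialOrder R] [IsOrderedRing R]
    {a : ι → κ → R} {A : R} (hA : ∀ i ∈ s, ∑ j ∈ t, a i j ≤ A) {w : ι → R}
    (hw : ∀ i ∈ s, 0 ≤ w i) : ∑ i ∈ s, ∑ j ∈ t, a i j * w i ≤ A * ∑ i ∈ s, w i := by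
  simp_rw [← Finset.sum_mul, Finset.mul_sum]
  exact Finset.sum_le_sum fun i hi => mul_le_mul_of_nonneg_right (hA i hi) (hw i hi)

theorem schur_test [CommSemiring R] [LinearOrder R] [IsStrictOrderedRing R] [ExistsAddOfLE R]
    {a : ι → κ → R} {A B : R} (ha : ∀ i ∈ s, ∀ j ∈ t, 0 ≤ a i j)
    (hA : ∀ i ∈ s, ∑ j ∈ t, a i j ≤ A) (hB : ∀ j ∈ t, ∑ i ∈ s, a i j ≤ B) (u : ι → R) (v : κ → R) :
    (∑ i ∈ s, ∑ j ∈ t, a i j * (u i * v j)) ^ 2 ≤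
      (A * ∑ i ∈ s, u i ^ 2) * (B * ∑ j ∈ t, v j ^ 2) := by
  have ha' : ∀ k ∈ s ×ˢ t, 0 ≤ a k.1 k.2 := fun k hk =>
    ha _ (Finset.mem_product.1 hk).1 _ (Finset.mem_product.1 hk).2
  have hu : ∀ k ∈ s ×ˢ t, 0 ≤ a k.1 k.2 * u k.1 ^ 2 := fun k hk =>
    mul_nonneg (ha' k hk) (sq_nonneg _)
  have hv : ∀ k ∈ s ×ˢ t, 0 ≤ a k.1 k.2 * v k.2 ^ 2 := fun k hk =>
    mul_nonneg (ha' k hk) (sq_nonneg _)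
  calc (∑ i ∈ s, ∑ j ∈ t, a i j * (u i * v j)) ^ 2
      ≤ (∑ i ∈ s, ∑ j ∈ t, a i j * u i ^ 2) * ∑ i ∈ s, ∑ j ∈ t, a i j * v j ^ 2 := by
        simp_rw [← Finset.sum_product']
        exact Finset.sum_sq_le_sum_mul_sum_of_sq_le_mul _ hu hv fun k _ => le_of_eq (by ring)
    _ ≤ (A * ∑ i ∈ s, u i ^ 2) * (B * ∑ j ∈ t, v j ^ 2) := by
        have hrow := sum_sum_mul_le_of_sum_le hA fun i _ => sq_nonneg (u i)
        have hcol := sum_sum_mul_le_of_sum_le hB fun j _ => sq_nonneg (v j)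
        rw [Finset.sum_comm] at hcol
        simp_rw [← Finset.sum_product'] at hrow hcol ⊢
        exact mul_le_mul hrow hcol (Finset.sum_nonneg hv) ((Finset.sum_nonneg hu).trans hrow)

end SchurTest

section SymmetricProjection

variable {𝕜 E F : Type*} [RCLike 𝕜]
  [SeminormedAddCommGroup E] [NormedSpace 𝕜 E]
  [SeminormedAddCommGroup F] [InnerProductSpace 𝕜 F]

theorem re_inner_comp_comp_le {p : E →L[𝕜] E} {q : F →L[𝕜] F} (hp : IsIdempotentElem p)
    (hq : IsIdempotentElem q) (hq' : q.IsSymmetric) (L : E →L[𝕜] F) (x : E) (y : F) :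
    RCLike.re ⟪q (L (p x)), y⟫_𝕜 ≤ ‖q ∘L L ∘L p‖ * (‖p x‖ * ‖q y‖) := by
  have hpp : p (p x) = p x := DFunLike.congr_fun hp.eq x
  have hqq : q (q (L (p x))) = q (L (p x)) := DFunLike.congr_fun hq.eq (L (p x))
  calc RCLike.re ⟪q (L (p x)), y⟫_𝕜 = RCLike.re ⟪(q ∘L L ∘L p) (p x), q y⟫_𝕜 := by
        rw [← hqq]
        simpa [hpp] using congrArg RCLike.re (hq' (q (L (p x))) y)
    _ ≤ ‖(q ∘L L ∘L p) (p x)‖ * ‖q y‖ := re_inner_le_norm _ _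
    _ ≤ ‖q ∘L L ∘L p‖ * ‖p x‖ * ‖q y‖ := by gcongr; exact ContinuousLinearMap.le_opNorm _ _
    _ = ‖q ∘L L ∘L p‖ * (‖p x‖ * ‖q y‖) := mul_assoc _ _ _

end SymmetricProjection

section OrthogonalProjections

variable {𝕜 E F ι κ : Type*} [RCLike 𝕜]
  [NormedAddCommGroup E] [InnerProductSpace 𝕜 E]
  [NormedAddCommGroup F] [InnerProductSpace 𝕜 F]
  {p : ι → E →L[𝕜] E} {q : κ → F →L[𝕜] F}

theorem norm_apply_le_of_isSymmetricProjection {f : E →ₗ[𝕜] E} (hf : f.IsSymmetricProjection)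
    (x : E) : ‖f x‖ ≤ ‖x‖ := by
  obtain ⟨K, _, rfl⟩ := LinearMap.isSymmetricProjection_iff_eq_coe_starProjection.1 hf
  exact K.norm_starProjection_apply_le x

theorem sum_sq_norm_apply_le (hp : OrthogonalIdempotents p) (hp' : ∀ i, (p i).IsSymmetric)
    (s : Finset ι) (x : E) : ∑ i ∈ s, ‖p i x‖ ^ 2 ≤ ‖x‖ ^ 2 := by
  have hsum : (∑ i ∈ s, p i).IsSymmetricProjection :=
    ⟨ContinuousLinearMap.IsIdempotentElem.toLinearMap hp.isIdempotentElem_sum, by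
      simpa using LinearMap.isSymmetric_sum s fun i _ => hp' i⟩
  have hsq (i : ι) : ‖p i x‖ ^ 2 = RCLike.re ⟪p i x, x⟫_𝕜 := by
    have hpp : p i (p i x) = p i x := DFunLike.congr_fun (hp.idem i).eq x
    rw [← inner_self_eq_norm_sq (𝕜 := 𝕜)]
    simpa [hpp] using congrArg RCLike.re (hp' i (p i x) x).symm
  calc ∑ i ∈ s, ‖p i x‖ ^ 2 = RCLike.re ⟪(∑ i ∈ s, p i) x, x⟫_𝕜 := by
        simp only [hsq, sum_apply, sum_inner, map_sum]
    _ ≤ ‖(∑ i ∈ s, p i) x‖ * ‖x‖ := re_inner_le_norm _ _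
    _ ≤ ‖x‖ * ‖x‖ := by gcongr; exact norm_apply_le_of_isSymmetricProjection hsum x
    _ = ‖x‖ ^ 2 := (sq _).symm

theorem opNorm_sum_comp_comp_sum_le_sqrt (hp : OrthogonalIdempotents p)
    (hp' : ∀ i, (p i).IsSymmetric) (hq : OrthogonalIdempotents q) (hq' : ∀ j, (q j).IsSymmetric)
    {s : Finset ι} {t : Finset κ} {L : E →L[𝕜] F} {A B : ℝ} (hA₀ : 0 ≤ A) (hB₀ : 0 ≤ B)
    (hA : ∀ i ∈ s, ∑ j ∈ t, ‖q j ∘L L ∘L p i‖ ≤ A)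
    (hB : ∀ j ∈ t, ∑ i ∈ s, ‖q j ∘L L ∘L p i‖ ≤ B) :
    ‖(∑ j ∈ t, q j) ∘L L ∘L ∑ i ∈ s, p i‖ ≤ √(A * B) := by
  refine ContinuousLinearMap.opNorm_le_of_re_inner_le (𝕜 := 𝕜) (Real.sqrt_nonneg _)
    fun x y hx hy => ?_
  have hx' : ∑ i ∈ s, ‖p i x‖ ^ 2 ≤ 1 := by simpa [hx] using sum_sq_norm_apply_le hp hp' s x
  have hy' : ∑ j ∈ t, ‖q j y‖ ^ 2 ≤ 1 := by simpa [hy] using sum_sq_norm_apply_le hq hq' t y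
  calc RCLike.re ⟪((∑ j ∈ t, q j) ∘L L ∘L ∑ i ∈ s, p i) x, y⟫_𝕜
      = ∑ i ∈ s, ∑ j ∈ t, RCLike.re ⟪q j (L (p i x)), y⟫_𝕜 := by
        simp only [ContinuousLinearMap.comp_apply, sum_apply, map_sum, sum_inner]
    _ ≤ ∑ i ∈ s, ∑ j ∈ t, ‖q j ∘L L ∘L p i‖ * (‖p i x‖ * ‖q j y‖) := by
        gcongr with i _ j _
        exact re_inner_comp_comp_le (hp.idem i) (hq.idem j) (hq' j) L x y
    _ ≤ √((A * ∑ i ∈ s, ‖p i x‖ ^ 2) * (B * ∑ j ∈ t, ‖q j y‖ ^ 2)) :=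
        Real.le_sqrt_of_sq_le (schur_test (fun _ _ _ _ => norm_nonneg _) hA hB _ _)
    _ ≤ √(A * B) := by
        gcongr
        exacts [mul_le_of_le_one_right hA₀ hx', mul_le_of_le_one_right hB₀ hy']

theorem block_opNorm_bound_general (hp : OrthogonalIdempotents p)
    (hp' : ∀ i, (p i).IsSymmetric) (hq : OrthogonalIdempotents q) (hq' : ∀ j, (q j).IsSymmetric)
    (s : Finset ι) (t : Finset κ) (L : E →L[𝕜] F) :
    ‖(∑ j ∈ t, q j) ∘L L ∘L ∑ i ∈ s, p i‖ ≤
      √((⨆ i ∈ s, ∑ j ∈ t, ‖q j ∘L L ∘L p i‖) * ⨆ j ∈ t, ∑ i ∈ s, ‖q j ∘L L ∘L p i‖) :=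
  opNorm_sum_comp_comp_sum_le_sqrt hp hp' hq hq'
    (iSup_finset_mem_nonneg fun _ _ => Finset.sum_nonneg fun _ _ => norm_nonneg _)
    (iSup_finset_mem_nonneg fun _ _ => Finset.sum_nonneg fun _ _ => norm_nonneg _)
    (fun _ hi => le_ciSup_finset_mem (fun i => ∑ j ∈ t, ‖q j ∘L L ∘L p i‖) hi)
    (fun _ hj => le_ciSup_finset_mem (fun j => ∑ i ∈ s, ‖q j ∘L L ∘L p i‖) hj)

end OrthogonalProjections

/-- For a finite family of pairwise-orthogonal (idempotent, self-adjoint) projections `Q_s` on a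
finite-dimensional complex inner product space, and disjoint index sets `R, R′`, the operator
norm of `Q_{R′} L Q_R` is bounded by
`max( max_{s∈R} Σ_{s′∈R′} ‖Q_{s′} L Q_s‖ , max_{s′∈R′} Σ_{s∈R} ‖Q_{s′} L Q_s‖ )`. -/
theorem block_opNorm_bound {W : Type*} [NormedAddCommGroup W] [InnerProductSpace ℂ W]
    [FiniteDimensional ℂ W] {S : Type*} [Fintype S] [DecidableEq S]
    (Q : S → W →L[ℂ] W)
    (hidem : ∀ s, (Q s).comp (Q s) = Q s)
    (horth : ∀ s s', s ≠ s' → (Q s).comp (Q s') = 0)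
    (hsa : ∀ s (x y : W), (inner ℂ (Q s x) y : ℂ) = (inner ℂ x (Q s y) : ℂ))
    (R R' : Finset S) (hRR' : Disjoint R R') (L : W →L[ℂ] W) :
    ‖(∑ s' ∈ R', Q s').comp (L.comp (∑ s ∈ R, Q s))‖ ≤
      max (⨆ s ∈ R, ∑ s' ∈ R', ‖(Q s').comp (L.comp (Q s))‖)
          (⨆ s' ∈ R', ∑ s ∈ R, ‖(Q s').comp (L.comp (Q s))‖) :=
  (block_opNorm_bound_general ⟨hidem, horth⟩ hsa ⟨hidem, horth⟩ hsa R R' L).trans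
    (sqrt_mul_le_max (iSup_finset_mem_nonneg fun _ _ => Finset.sum_nonneg fun _ _ => norm_nonneg _))
end

section
/- Fix γ, δ > 0 and κ ∈ (0,1). Then there exist constants b > 0, ζ > 0 and a positive integer N₀ such that for every even integer N > N₀ and every even integer q with 2 < q < γ·N^{(1−δ)/6} and 2q < N, the following holds: with probability at least 1 − 2(q−2)/(N^ζ − 1) over the random couplings (J_X)_{X∈F}, the operator scrambling time of a single fermion satisfies t_{s,κ} := inf{ t > 0 : Σ_{l=0}^{N′} l·P_l(t) ≥ κ·N′ } ≥ b·log N, where P_l(t) := (O(t)| Q_l O(t)) with O(t) := e^{iHt} ψ_1 e^{−iHt}. -/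
open Matrix

/-- `N′ := ⌈(N−1)/(q−2)⌉`. -/
def Nprime (N q : ℕ) : ℕ := (N + q - 4) / (q - 2)

/-- The block `R_l` of operator sizes. -/
def blockR (N q l : ℕ) : Finset ℕ :=
  if l = 0 then {1}
  else if l < Nprime N q then Finset.Ioc ((l - 1) * (q - 2) + 1) (l * (q - 2) + 1)
  else Finset.Ioc ((Nprime N q - 1) * (q - 2) + 1) N

/-- The coupling magnitude `σ := [2q·C(N−1, q−1)]^{−1/2}`. -/
noncomputable def sykSigma (N q : ℕ) : ℝ :=
  (Real.sqrt (2 * q * ((N - 1).choose (q - 1))))⁻¹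

/-- The SYK Hamiltonian `H = i^{q/2} Σ_{X∈F} J_X ψ_X`, where each coupling `J_X` is `±σ`
according to the sign assignment `ε`. -/
noncomputable def sykH {N : ℕ} (q : ℕ)
    (ψ : Fin N → Matrix (Fin (2 ^ (N / 2))) (Fin (2 ^ (N / 2))) ℂ)
    (ε : {X : Finset (Fin N) // X.card = q} → Bool) :
    Matrix (Fin (2 ^ (N / 2))) (Fin (2 ^ (N / 2))) ℂ :=
  Complex.I ^ (q / 2) • ∑ X : {X : Finset (Fin N) // X.card = q},
    ((if ε X then sykSigma N q else -sykSigma N q : ℝ) : ℂ) • psiProd ψ X.1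

/-!
Averaging over the random signs leaves in `𝔼 ‖(ad H)^k ψ_v‖²` only pairs of words of `k` hyperedges
in which, taken together, every hyperedge occurs an even number of times. A nested commutator
vanishes unless its word grows a connected cluster from `v`, and every new hyperedge of the cluster
has weight `σ²`, which is offset by the number of hyperedges meeting the cluster. Counting
connected words gives `𝔼 ‖(ad H)^k ψ_v‖² ≤ 64 ^ k * k!² * ‖ψ_v‖²`, so by Markov's inequality and a
union bound over `k`, outside an event of probability `2 / N ^ ζ` one has
`‖(ad H)^k ψ_v‖² ≤ N ^ ζ * 128 ^ k * k!² * ‖ψ_v‖²` for all `k`.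

Let `T` be the projection onto the sizes above `1 + n q`. Since `(ad H)^k ψ_v` has size at most
`1 + k q`, the first `n` derivatives of `T (O(t))` vanish at `t = 0`, and all its derivatives
satisfy factorial bounds uniformly in `t`. Such a function stays small for `J` time steps of
constant length if three quarters of the controlled derivatives are given up at each step:
`n = 4 ^ J * r` leaves an error of order `2 ^ (-r)`. With `J` a small and `r` a large multiple of
`log N`, the mean block index is `O(N ^ ((1 - α) / 2) * log N)` plus a negligible tail up to time
`J / 96`, whereas `N′` is at least of order `N ^ (1 - α)` when `q < γ N ^ α`.
-/

section Words

variable {F : Type*}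

theorem sum_word_succ {M : Type*} [Fintype F] [AddCommMonoid M] (f : List F → M) (k : ℕ) :
    ∑ w : Fin (k + 1) → F, f (List.ofFn w) =
      ∑ X, ∑ w : Fin k → F, f (X :: List.ofFn w) := by
  rw [← (Fin.consEquiv fun _ => F).sum_comp, Fintype.sum_prod_type]
  exact Finset.sum_congr rfl fun X _ => Finset.sum_congr rfl fun w _ =>
    congrArg f (List.ofFn_cons X w)

theorem sum_word_append {M : Type*} [Fintype F] [AddCommMonoid M] (f : List F → M) (m n : ℕ) :
    ∑ u : Fin m → F, ∑ w : Fin n → F, f (List.ofFn u ++ List.ofFn w) =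
      ∑ w : Fin (m + n) → F, f (List.ofFn w) := by
  rw [← (Fin.appendEquiv m n).sum_comp, Fintype.sum_prod_type]
  exact Finset.sum_congr rfl fun u _ => Finset.sum_congr rfl fun w _ =>
    congrArg f (List.ofFn_fin_append u w).symm

theorem sum_pow_eq_sum_word {A : Type*} [Fintype F] [Semiring A] (g : F → A) (k : ℕ) :
    (∑ X, g X) ^ k = ∑ w : Fin k → F, ((List.ofFn w).map g).prod := by
  induction k with
  | zero => simp only [pow_zero, List.ofFn_zero, List.map_nil, List.prod_nil, Finset.sum_const,
      Finset.card_univ, Fintype.card_unique, one_smul]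
  | succ k ih =>
    rw [sum_word_succ fun l => (l.map g).prod, pow_succ', ih, Finset.sum_mul_sum]
    simp only [List.map_cons, List.prod_cons]

theorem prod_map_smul {R A : Type*} [CommSemiring R] [Semiring A] [Algebra R A] (c : F → R)
    (g : F → A) (l : List F) :
    (l.map fun X => c X • g X).prod = (l.map c).prod • (l.map g).prod := by
  induction l with
  | nil => simp
  | cons X l ih =>
    simp only [List.map_cons, List.prod_cons, ih, smul_mul_smul_comm]

end Words

section Rademacher

variable {F : Type*}

/-- The value `±1` of a Boolean sign. -/
def rademacher (b : Bool) : ℝ := if b then 1 else -1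

/-- The product of the random signs of the letters of a word. -/
def wordSign (ε : F → Bool) (l : List F) : ℝ := (l.map (rademacher ∘ ε)).prod

theorem wordSign_append (ε : F → Bool) (l l' : List F) :
    wordSign ε (l ++ l') = wordSign ε l * wordSign ε l' := by
  simp only [wordSign, List.map_append, List.prod_append]

theorem sum_rademacher_pow (n : ℕ) : ∑ b, rademacher b ^ n = if Even n then 2 else 0 := by
  rcases Nat.even_or_odd n with h | h
  · simp [rademacher, h, h.neg_one_pow, one_add_one_eq_two]
  · simp [rademacher, h.neg_one_pow, Nat.not_even_iff_odd.2 h]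

variable [DecidableEq F]

/-- The words in which every letter occurs an even number of times. -/
def EvenCounts (l : List F) : Prop := ∀ X, Even (l.count X)

instance [Fintype F] : DecidablePred (EvenCounts (F := F)) :=
  fun _ => Fintype.decidableForallFintype

theorem sum_wordSign [Fintype F] (l : List F) :
    ∑ ε : F → Bool, wordSign ε l = if EvenCounts l then 2 ^ Fintype.card F else 0 := by
  have h_prod (ε : F → Bool) : wordSign ε l = ∏ X, rademacher (ε X) ^ l.count X := by
    rw [wordSign, Finset.prod_list_map_count]
    refine Finset.prod_subset (Finset.subset_univ _) fun X _ hX => ?_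
    rw [List.count_eq_zero.2 fun h => hX (List.mem_toFinset.2 h), pow_zero]
  simp only [h_prod]
  rw [← Fintype.prod_sum fun X b => rademacher b ^ l.count X]
  simp only [sum_rademacher_pow, Finset.prod_ite_zero, Finset.prod_const, Finset.card_univ,
    EvenCounts, Finset.mem_univ, true_imp_iff]

theorem EvenCounts.two_mul_card_toFinset_le {l : List F} (h : EvenCounts l) :
    2 * l.toFinset.card ≤ l.length := by
  rw [← l.sum_toFinset_count_eq_length, mul_comm, ← smul_eq_mul]
  refine Finset.card_nsmul_le_sum _ _ _ fun X hX => ?_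
  have h_pos := List.count_pos_iff.2 (List.mem_toFinset.1 hX)
  obtain ⟨m, hm⟩ := h X
  omega

theorem sum_norm_sq_sum_wordSign_smul {E ι : Type*} (𝕜 : Type*) [RCLike 𝕜]
    [NormedAddCommGroup E] [InnerProductSpace 𝕜 E] [NormedSpace ℝ E] [IsScalarTower ℝ 𝕜 E]
    [Fintype F] [Fintype ι] (l : ι → List F) (x : ι → E) :
    ∑ ε : F → Bool, ‖∑ i, wordSign ε (l i) • x i‖ ^ 2 =
      2 ^ Fintype.card F *
        ∑ i, ∑ j, if EvenCounts (l i ++ l j) then RCLike.re (inner 𝕜 (x i) (x j)) else 0 := by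
  have h_expand (ε : F → Bool) : ‖∑ i, wordSign ε (l i) • x i‖ ^ 2 =
      ∑ i, ∑ j, wordSign ε (l i ++ l j) * RCLike.re (inner 𝕜 (x i) (x j)) := by
    rw [← inner_self_eq_norm_sq (𝕜 := 𝕜), sum_inner, map_sum]
    refine Finset.sum_congr rfl fun i _ => ?_
    rw [inner_sum, map_sum]
    refine Finset.sum_congr rfl fun j _ => ?_
    rw [wordSign_append, inner_smul_left_eq_smul, inner_smul_right_eq_smul, smul_smul,
      RCLike.smul_re]
  simp only [h_expand]
  rw [Finset.sum_comm, Finset.mul_sum]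
  refine Finset.sum_congr rfl fun i _ => ?_
  rw [Finset.sum_comm, Finset.mul_sum]
  refine Finset.sum_congr rfl fun j _ => ?_
  rw [← Finset.sum_mul, sum_wordSign, ite_mul, zero_mul, mul_ite, mul_zero]

end Rademacher

section ConnectedWords

variable {V F : Type*} [DecidableEq V] (e : F → Finset V) (S : Finset V)

/-- The vertices touched by a word of hyperedges, together with the initial set `S`. -/
def wordSupport (l : List F) : Finset V := l.foldr (fun X U => e X ∪ U) S

/-- The words which, read from right to left, grow a connected cluster: every hyperedge meets
the initial set `S` or an earlier hyperedge. -/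
def IsConnectedWord : List F → Prop
  | [] => True
  | X :: l => IsConnectedWord l ∧ ¬ Disjoint (e X) (wordSupport e S l)

variable {e S}

theorem subset_wordSupport (l : List F) : S ⊆ wordSupport e S l := by
  induction l with
  | nil => exact subset_rfl
  | cons X l ih => exact ih.trans Finset.subset_union_right

theorem wordSupport_mono {S' : Finset V} (h : S ⊆ S') (l : List F) :
    wordSupport e S l ⊆ wordSupport e S' l := by
  induction l with
  | nil => exact h
  | cons X l ih => exact Finset.union_subset_union_right ih

theorem wordSupport_append (l l' : List F) :
    wordSupport e S (l ++ l') = wordSupport e (wordSupport e S l') l := List.foldr_append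

theorem IsConnectedWord.append {l l' : List F} (h : IsConnectedWord e S l)
    (h' : IsConnectedWord e S l') : IsConnectedWord e S (l ++ l') := by
  induction l with
  | nil => exact h'
  | cons X l ih =>
    have h_mono : wordSupport e S l ⊆ wordSupport e S (l ++ l') := by
      rw [wordSupport_append]
      exact wordSupport_mono (subset_wordSupport l') l
    exact ⟨ih h.1, fun h_disj => h.2 (h_disj.mono_right h_mono)⟩

variable {q : ℕ}

theorem card_wordSupport_le (he : ∀ X, (e X).card ≤ q) (hS : S.card ≤ q) (l : List F) :
    (wordSupport e S l).card ≤ (l.length + 1) * q := by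
  induction l with
  | nil => rwa [List.length_nil, zero_add, one_mul]
  | cons X l ih =>
    calc (e X ∪ wordSupport e S l).card ≤ q + (l.length + 1) * q :=
          (Finset.card_union_le _ _).trans (Nat.add_le_add (he X) ih)
      _ = ((X :: l).length + 1) * q := by rw [List.length_cons]; ring

variable [Fintype F] {D : ℕ}

theorem card_not_disjoint_le (hD : ∀ i, (Finset.univ.filter fun X => i ∈ e X).card ≤ D)
    (U : Finset V) : (Finset.univ.filter fun X => ¬ Disjoint (e X) U).card ≤ U.card * D := by
  classical
  have h_cover : (Finset.univ.filter fun X => ¬ Disjoint (e X) U) ⊆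
      U.biUnion fun i => Finset.univ.filter fun X => i ∈ e X := fun X hX => by
    obtain ⟨i, hiX, hiU⟩ := Finset.not_disjoint_iff.1 (Finset.mem_filter.1 hX).2
    exact Finset.mem_biUnion.2 ⟨i, hiU, Finset.mem_filter.2 ⟨Finset.mem_univ X, hiX⟩⟩
  exact (Finset.card_le_card h_cover).trans (Finset.card_biUnion_le_card_mul _ _ _ fun i _ => hD i)

variable [DecidableEq F] {z : ℝ}

open Classical in
variable (e S) in
/-- The connected words of length `m`, counted with weight `z` for every distinct letter. -/
noncomputable def connectedWordSum (z : ℝ) (m : ℕ) : ℝ :=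
  ∑ w : Fin m → F, if IsConnectedWord e S (List.ofFn w) then z ^ (List.ofFn w).toFinset.card else 0

open Classical in
-- A further letter either repeats one of the at most `#l` old ones, or is one of the at most
-- `(#l + 1) q D` hyperedges meeting the cluster and then costs a factor `z`.
theorem sum_connected_cons_le (hz : 0 ≤ z) (he : ∀ X, (e X).card ≤ q) (hS : S.card ≤ q)
    (hD : ∀ i, (Finset.univ.filter fun X => i ∈ e X).card ≤ D) (hzqD : z * (q * D) ≤ 1)
    (l : List F) :
    (∑ X, if IsConnectedWord e S (X :: l) then z ^ (X :: l).toFinset.card else 0) ≤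
      2 * (l.length + 1) *
        if IsConnectedWord e S l then z ^ l.toFinset.card else 0 := by
  by_cases h_conn : IsConnectedWord e S l
  swap
  · simp [IsConnectedWord, h_conn]
  rw [if_pos h_conn]
  set d := l.toFinset.card with hd
  have h_letter (X : F) : (if IsConnectedWord e S (X :: l) then z ^ (X :: l).toFinset.card else 0) ≤
      (if X ∈ l.toFinset then z ^ d else 0) +
        if ¬ Disjoint (e X) (wordSupport e S l) then z ^ (d + 1) else 0 := by
    by_cases hX : X ∈ l.toFinset
    · rw [List.toFinset_cons, Finset.insert_eq_of_mem hX, if_pos hX]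
      have h_repeat := pow_nonneg hz d
      have h_fresh := pow_nonneg hz (d + 1)
      split_ifs <;> linarith
    · rw [List.toFinset_cons, Finset.card_insert_of_notMem hX, if_neg hX, zero_add]
      simp only [IsConnectedWord, h_conn, true_and, hd, le_refl]
  have h_old : ((Finset.univ.filter (· ∈ l.toFinset)).card : ℝ) ≤ l.length := by
    rw [Finset.filter_univ_mem]
    exact_mod_cast l.toFinset_card_le
  have h_new : ((Finset.univ.filter fun X => ¬ Disjoint (e X) (wordSupport e S l)).card : ℝ) ≤
      (l.length + 1) * (q * D) := by
    rw [← mul_assoc]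
    exact_mod_cast (card_not_disjoint_le hD _).trans
      (Nat.mul_le_mul_right D (card_wordSupport_le he hS l))
  calc _ ≤ (Finset.univ.filter (· ∈ l.toFinset)).card * z ^ d +
          (Finset.univ.filter fun X => ¬ Disjoint (e X) (wordSupport e S l)).card *
            z ^ (d + 1) := by
        refine (Finset.sum_le_sum fun X _ => h_letter X).trans_eq ?_
        rw [Finset.sum_add_distrib, ← Finset.sum_filter, ← Finset.sum_filter, Finset.sum_const,
          Finset.sum_const, nsmul_eq_mul, nsmul_eq_mul]
    _ ≤ l.length * z ^ d + (l.length + 1) * (q * D) * z ^ (d + 1) := by gcongr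
    _ = (l.length + (l.length + 1) * (z * (q * D))) * z ^ d := by ring
    _ ≤ (l.length + (l.length + 1) * 1) * z ^ d := by gcongr
    _ ≤ 2 * (l.length + 1) * z ^ d := by gcongr; linarith

theorem connectedWordSum_le (hz : 0 ≤ z) (he : ∀ X, (e X).card ≤ q) (hS : S.card ≤ q)
    (hD : ∀ i, (Finset.univ.filter fun X => i ∈ e X).card ≤ D) (hzqD : z * (q * D) ≤ 1) (m : ℕ) :
    connectedWordSum e S z m ≤ 2 ^ m * m.factorial := by
  classical
  induction m with
  | zero => simp [connectedWordSum, IsConnectedWord]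
  | succ m ih =>
    calc connectedWordSum e S z (m + 1)
        ≤ ∑ w : Fin m → F, 2 * (m + 1 : ℝ) *
            if IsConnectedWord e S (List.ofFn w) then z ^ (List.ofFn w).toFinset.card else 0 := by
          rw [connectedWordSum, sum_word_succ fun l =>
            if IsConnectedWord e S l then z ^ l.toFinset.card else 0, Finset.sum_comm]
          refine Finset.sum_le_sum fun w _ => ?_
          simpa only [List.length_ofFn] using sum_connected_cons_le hz he hS hD hzqD (List.ofFn w)
      _ = 2 * (m + 1) * connectedWordSum e S z m := by rw [← Finset.mul_sum, connectedWordSum]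
      _ ≤ 2 * (m + 1) * (2 ^ m * m.factorial) := by gcongr
      _ = 2 ^ (m + 1) * (m + 1).factorial := by rw [Nat.factorial_succ]; push_cast; ring

end ConnectedWords

section RandomMoments

theorem factorial_add_self_le (k : ℕ) : (k + k).factorial ≤ 4 ^ k * k.factorial ^ 2 := by
  calc (k + k).factorial = (k + k).choose k * k.factorial ^ 2 := by
        rw [← Nat.add_choose_mul_factorial_mul_factorial, mul_assoc, sq]
    _ ≤ 2 ^ (k + k) * k.factorial ^ 2 := by gcongr; exact Nat.choose_le_two_pow _ _
    _ = 4 ^ k * k.factorial ^ 2 := by rw [← two_mul, pow_mul]; rfl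

variable {F E 𝕜 : Type*} [RCLike 𝕜] [NormedAddCommGroup E] [InnerProductSpace 𝕜 E]
  {T : F → E →ₗ[𝕜] E} {x : E}

theorem norm_prod_map_apply_le {c : ℝ} (hT : ∀ X y, ‖T X y‖ ≤ c * ‖y‖) (hc : 0 ≤ c)
    (l : List F) : ‖(l.map T).prod x‖ ≤ c ^ l.length * ‖x‖ := by
  induction l with
  | nil => simp
  | cons X l ih =>
    calc ‖T X ((l.map T).prod x)‖ ≤ c * (c ^ l.length * ‖x‖) :=
          (hT X _).trans (by gcongr)
      _ = c ^ (X :: l).length * ‖x‖ := by rw [List.length_cons]; ring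

variable [Fintype F]

theorem sum_wordSign_pow_apply [NormedSpace ℝ E] [IsScalarTower ℝ 𝕜 E] (k : ℕ) (ε : F → Bool) :
    ((∑ X, rademacher (ε X) • T X) ^ k) x =
      ∑ w : Fin k → F, wordSign ε (List.ofFn w) • ((List.ofFn w).map T).prod x := by
  rw [sum_pow_eq_sum_word, LinearMap.sum_apply]
  exact Finset.sum_congr rfl fun w _ => by
    rw [prod_map_smul (fun X => rademacher (ε X)), LinearMap.smul_apply]; rfl

variable {V : Type*} [DecidableEq V] [DecidableEq F]
  {e : F → Finset V} {S : Finset V} {q D : ℕ} {σ : ℝ}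

open Classical in
theorem inner_prod_map_apply_le (hσ : 0 ≤ σ) (hσ1 : σ ≤ 1)
    (hT : ∀ X y, ‖T X y‖ ≤ 2 * σ * ‖y‖)
    (h_conn : ∀ l : List F, ¬ IsConnectedWord e S l → (l.map T).prod x = 0) {k : ℕ}
    {l l' : List F} (hl : l.length = k) (hl' : l'.length = k) :
    (if EvenCounts (l ++ l') then
        RCLike.re (inner 𝕜 ((l.map T).prod x) ((l'.map T).prod x)) else 0) ≤
      4 ^ k * ‖x‖ ^ 2 *
        if IsConnectedWord e S (l ++ l') then (σ ^ 2) ^ (l ++ l').toFinset.card else 0 := by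
  have h_nonneg : 0 ≤ 4 ^ k * ‖x‖ ^ 2 *
      if IsConnectedWord e S (l ++ l') then (σ ^ 2) ^ (l ++ l').toFinset.card else 0 := by
    positivity
  by_cases h_even : EvenCounts (l ++ l')
  swap
  · rwa [if_neg h_even]
  rw [if_pos h_even]
  by_cases hl_conn : IsConnectedWord e S l
  swap
  · rwa [h_conn l hl_conn, inner_zero_left, map_zero]
  by_cases hl'_conn : IsConnectedWord e S l'
  swap
  · rwa [h_conn l' hl'_conn, inner_zero_right, map_zero]
  rw [if_pos (hl_conn.append hl'_conn)]
  have h_card : (l ++ l').toFinset.card ≤ k := by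
    have h := h_even.two_mul_card_toFinset_le
    rw [List.length_append] at h
    omega
  calc RCLike.re (inner 𝕜 ((l.map T).prod x) ((l'.map T).prod x))
      ≤ ‖(l.map T).prod x‖ * ‖(l'.map T).prod x‖ := re_inner_le_norm _ _
    _ ≤ ((2 * σ) ^ k * ‖x‖) * ((2 * σ) ^ k * ‖x‖) := by
        have hc : 0 ≤ 2 * σ := by positivity
        gcongr
        · exact hl ▸ norm_prod_map_apply_le hT hc l
        · exact hl' ▸ norm_prod_map_apply_le hT hc l'
    _ = 4 ^ k * ‖x‖ ^ 2 * (σ ^ 2) ^ k := by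
        rw [show (4 : ℝ) = 2 * 2 by norm_num, mul_pow 2 2]; ring
    _ ≤ 4 ^ k * ‖x‖ ^ 2 * (σ ^ 2) ^ (l ++ l').toFinset.card := by
        gcongr 4 ^ k * ‖x‖ ^ 2 * ?_
        exact pow_le_pow_of_le_one (sq_nonneg σ) (pow_le_one₀ hσ hσ1) h_card

theorem sum_norm_sq_pow_apply_le [NormedSpace ℝ E] [IsScalarTower ℝ 𝕜 E]
    (hσ : 0 ≤ σ) (hσ1 : σ ≤ 1) (hT : ∀ X y, ‖T X y‖ ≤ 2 * σ * ‖y‖)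
    (h_conn : ∀ l : List F, ¬ IsConnectedWord e S l → (l.map T).prod x = 0)
    (he : ∀ X, (e X).card ≤ q) (hS : S.card ≤ q)
    (hD : ∀ i, (Finset.univ.filter fun X => i ∈ e X).card ≤ D) (hσD : σ ^ 2 * (q * D) ≤ 1)
    (k : ℕ) :
    ∑ ε : F → Bool, ‖((∑ X, rademacher (ε X) • T X) ^ k) x‖ ^ 2 ≤
      2 ^ Fintype.card F * (64 ^ k * k.factorial ^ 2 * ‖x‖ ^ 2) := by
  classical
  simp only [sum_wordSign_pow_apply]
  rw [sum_norm_sq_sum_wordSign_smul 𝕜]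
  gcongr
  calc _ ≤ ∑ u : Fin k → F, ∑ w : Fin k → F, 4 ^ k * ‖x‖ ^ 2 *
          if IsConnectedWord e S (List.ofFn u ++ List.ofFn w) then
            (σ ^ 2) ^ (List.ofFn u ++ List.ofFn w).toFinset.card else 0 := by
        gcongr with u _ w _
        exact inner_prod_map_apply_le hσ hσ1 hT h_conn List.length_ofFn List.length_ofFn
    _ = 4 ^ k * ‖x‖ ^ 2 * connectedWordSum e S (σ ^ 2) (k + k) := by
        simp only [← Finset.mul_sum]
        rw [sum_word_append fun l => if IsConnectedWord e S l then (σ ^ 2) ^ l.toFinset.card else 0,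
          connectedWordSum]
    _ ≤ 4 ^ k * ‖x‖ ^ 2 * (2 ^ (k + k) * (4 ^ k * k.factorial ^ 2)) := by
        have h_sum := connectedWordSum_le (sq_nonneg σ) he hS hD hσD (k + k)
        have h_fact : ((k + k).factorial : ℝ) ≤ 4 ^ k * k.factorial ^ 2 := by
          exact_mod_cast factorial_add_self_le k
        gcongr
        exact h_sum.trans (by gcongr)
    _ = 64 ^ k * k.factorial ^ 2 * ‖x‖ ^ 2 := by
        rw [show (64 : ℝ) = 4 * (2 * 2) * 4 by norm_num, mul_pow, mul_pow, mul_pow]; ring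

end RandomMoments

section NestedCommutators

attribute [local instance] LieRing.ofAssociativeRing

variable {K A V F : Type*} [CommRing K] [Ring A] [Algebra K A] [DecidableEq V]
  {e : F → Finset V} {S : Finset V} {h : F → A} {x : A}

theorem commute_ad_apply {a b c : A} (hab : Commute a b) (hac : Commute a c) :
    Commute a (LieAlgebra.ad K A b c) :=
  (hab.mul_right hac).sub_right (hac.mul_right hab)

theorem commute_prod_ad_apply (h_edge : ∀ X Y, Disjoint (e X) (e Y) → Commute (h X) (h Y))
    (h_start : ∀ X, Disjoint (e X) S → Commute (h X) x) {X : F} {l : List F}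
    (hX : Disjoint (e X) (wordSupport e S l)) :
    Commute (h X) ((l.map fun Y => LieAlgebra.ad K A (h Y)).prod x) := by
  induction l with
  | nil => exact h_start X hX
  | cons Y l ih =>
    obtain ⟨hXY, hXl⟩ := Finset.disjoint_union_right.1 hX
    exact commute_ad_apply (K := K) (h_edge X Y hXY) (ih hXl)

theorem prod_ad_apply_eq_zero (h_edge : ∀ X Y, Disjoint (e X) (e Y) → Commute (h X) (h Y))
    (h_start : ∀ X, Disjoint (e X) S → Commute (h X) x) (l : List F)
    (hl : ¬ IsConnectedWord e S l) :
    (l.map fun X => LieAlgebra.ad K A (h X)).prod x = 0 := by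
  induction l with
  | nil => exact absurd trivial hl
  | cons X l ih =>
    rw [List.map_cons, List.prod_cons, Module.End.mul_apply]
    by_cases hl' : IsConnectedWord e S l
    · have hX : Disjoint (e X) (wordSupport e S l) := not_not.1 fun hX => hl ⟨hl', hX⟩
      exact (commute_prod_ad_apply h_edge h_start hX).lie_eq
    · rw [ih hl', map_zero]

end NestedCommutators

section Frobenius

open scoped Matrix.Norms.Frobenius

variable {n : Type*} [Fintype n] [DecidableEq n]

/-- The Hilbert–Schmidt inner product `tr (A† B)`, whose norm is the Frobenius norm. -/
@[reducible]
noncomputable def frobeniusInnerProductSpace : InnerProductSpace ℂ (Matrix n n ℂ) where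
  inner A B := (Aᴴ * B).trace
  norm_sq_eq_re_inner A := by
    rw [frobenius_norm_def, ← Real.rpow_natCast, ← Real.rpow_mul (by positivity)]
    simp only [trace, diag_apply, mul_apply, conjTranspose_apply, RCLike.star_def,
      RCLike.conj_mul]
    rw [Finset.sum_comm]
    norm_num [← Complex.ofReal_pow]
  conj_inner_symm A B := by
    rw [starRingEnd_apply, ← trace_conjTranspose, conjTranspose_mul, conjTranspose_conjTranspose]
  add_left A B C := by rw [conjTranspose_add, add_mul, trace_add]
  smul_left A B c := by
    rw [conjTranspose_smul, smul_mul_assoc, trace_smul, smul_eq_mul, starRingEnd_apply]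

attribute [local instance] frobeniusInnerProductSpace

theorem frobenius_inner_eq (A B : Matrix n n ℂ) : inner ℂ A B = (Aᴴ * B).trace := rfl

theorem inner_unitary_mul {U : Matrix n n ℂ} (hU : U ∈ unitary (Matrix n n ℂ))
    (A B : Matrix n n ℂ) : inner ℂ (U * A) (U * B) = inner ℂ A B := by
  rw [frobenius_inner_eq, frobenius_inner_eq, conjTranspose_mul, mul_assoc, ← mul_assoc Uᴴ,
    ← star_eq_conjTranspose U, Unitary.star_mul_self_of_mem hU, one_mul]

theorem inner_mul_unitary {U : Matrix n n ℂ} (hU : U ∈ unitary (Matrix n n ℂ))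
    (A B : Matrix n n ℂ) : inner ℂ (A * U) (B * U) = inner ℂ A B := by
  rw [frobenius_inner_eq, frobenius_inner_eq, conjTranspose_mul, ← mul_assoc, trace_mul_comm,
    ← mul_assoc, ← mul_assoc, ← star_eq_conjTranspose U, Unitary.mul_star_self_of_mem hU, one_mul]

theorem norm_unitary_mul {U : Matrix n n ℂ} (hU : U ∈ unitary (Matrix n n ℂ))
    (A : Matrix n n ℂ) : ‖U * A‖ = ‖A‖ := by
  rw [norm_eq_sqrt_re_inner (𝕜 := ℂ), inner_unitary_mul hU, ← norm_eq_sqrt_re_inner]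

theorem norm_mul_unitary {U : Matrix n n ℂ} (hU : U ∈ unitary (Matrix n n ℂ))
    (A : Matrix n n ℂ) : ‖A * U‖ = ‖A‖ := by
  rw [norm_eq_sqrt_re_inner (𝕜 := ℂ), inner_mul_unitary hU, ← norm_eq_sqrt_re_inner]

attribute [local instance] LieRing.ofAssociativeRing

theorem norm_ad_smul_unitary_le {U : Matrix n n ℂ} (hU : U ∈ unitary (Matrix n n ℂ)) (c : ℂ)
    (A : Matrix n n ℂ) : ‖LieAlgebra.ad ℂ (Matrix n n ℂ) (c • U) A‖ ≤ 2 * ‖c‖ * ‖A‖ := by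
  calc ‖c • U * A - A * (c • U)‖ = ‖c • (U * A - A * U)‖ := by
        rw [smul_mul_assoc, mul_smul_comm, smul_sub]
    _ ≤ ‖c‖ * (‖U * A‖ + ‖A * U‖) := by
        rw [norm_smul]
        gcongr
        exact norm_sub_le _ _
    _ = 2 * ‖c‖ * ‖A‖ := by rw [norm_unitary_mul hU, norm_mul_unitary hU]; ring

end Frobenius

section Majorana

/-- The operators on the Hilbert space of `N` Majorana fermions. -/
abbrev MajoranaOp (N : ℕ) := Matrix (Fin (2 ^ (N / 2))) (Fin (2 ^ (N / 2))) ℂ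

/-- Hermitian matrices satisfying the Majorana anticommutation relations. -/
structure IsMajorana {N : ℕ} (ψ : Fin N → MajoranaOp N) : Prop where
  isHermitian : ∀ i, (ψ i).IsHermitian
  anticomm : ∀ i j, ψ i * ψ j + ψ j * ψ i = (if i = j then (2 : ℂ) else 0) • (1 : MajoranaOp N)

variable {N : ℕ} {ψ : Fin N → MajoranaOp N}

theorem psiProd_empty : psiProd ψ ∅ = 1 := by
  rw [psiProd, Finset.sort_empty, List.map_nil, List.prod_nil]

theorem psiProd_insert {a : Fin N} {s : Finset (Fin N)} (h : ∀ x ∈ s, a < x) :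
    psiProd ψ (insert a s) = ψ a * psiProd ψ s := by
  rw [psiProd, Finset.sort_insert _ (fun x hx => (h x hx).le) fun ha => (h a ha).false,
    List.map_cons, List.prod_cons, psiProd]

theorem psiProd_singleton (i : Fin N) : psiProd ψ {i} = ψ i := by
  rw [psiProd, Finset.sort_singleton, List.map_singleton, List.prod_singleton]

namespace IsMajorana

variable (hψ : IsMajorana ψ)
include hψ

theorem mul_self (i : Fin N) : ψ i * ψ i = 1 := by
  have h := hψ.anticomm i i
  rw [if_pos rfl, ← two_smul ℂ] at h
  exact smul_right_injective _ two_ne_zero h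

theorem mul_eq_neg {i j : Fin N} (hij : i ≠ j) : ψ i * ψ j = -(ψ j * ψ i) := by
  have h := hψ.anticomm i j
  rw [if_neg hij, zero_smul] at h
  exact eq_neg_of_add_eq_zero_left h

theorem mem_unitary (i : Fin N) : ψ i ∈ unitary (MajoranaOp N) := by
  rw [Unitary.mem_iff, star_eq_conjTranspose, (hψ.isHermitian i).eq, and_self]
  exact hψ.mul_self i

theorem psiProd_mem_unitary (Y : Finset (Fin N)) : psiProd ψ Y ∈ unitary (MajoranaOp N) := by
  refine Submonoid.list_prod_mem _ fun A hA => ?_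
  obtain ⟨i, -, rfl⟩ := List.mem_map.1 hA
  exact hψ.mem_unitary i

theorem mul_psiProd_eq_smul (i : Fin N) (Y : Finset (Fin N)) :
    ψ i * psiProd ψ Y = (-1 : ℂ) ^ (Y.erase i).card • (psiProd ψ Y * ψ i) := by
  induction Y using Finset.induction_on_min with
  | empty => simp [psiProd_empty]
  | insert a s has ih =>
    have ha : a ∉ s := fun ha => (has a ha).false
    rw [psiProd_insert has]
    rcases eq_or_ne i a with rfl | hia
    · rw [Finset.erase_eq_of_notMem ha] at ih
      rw [Finset.erase_insert ha, mul_assoc (ψ i), ih, mul_smul_comm]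
    · rw [Finset.erase_insert_of_ne hia.symm, Finset.card_insert_of_notMem (by simp [ha]),
        ← mul_assoc, hψ.mul_eq_neg hia, neg_mul, mul_assoc, ih, mul_smul_comm, pow_succ,
        mul_neg_one, neg_smul, mul_assoc]

theorem conjTranspose_psiProd (Y : Finset (Fin N)) :
    (psiProd ψ Y)ᴴ = (-1 : ℂ) ^ Y.card.choose 2 • psiProd ψ Y := by
  induction Y using Finset.induction_on_min with
  | empty => simp [psiProd_empty]
  | insert a s has ih =>
    have ha : a ∉ s := fun ha => (has a ha).false
    have h_comm := hψ.mul_psiProd_eq_smul a s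
    rw [Finset.erase_eq_of_notMem ha] at h_comm
    rw [psiProd_insert has, Finset.card_insert_of_notMem ha, Nat.choose_succ_succ' s.card 1,
      Nat.choose_one_right, conjTranspose_mul, ih, (hψ.isHermitian a).eq, h_comm, smul_smul,
      smul_mul_assoc, add_comm, pow_add, mul_assoc, ← mul_pow, neg_one_mul, neg_neg, one_pow,
      mul_one]

theorem commute_psiProd {X Y : Finset (Fin N)} (hX : Even X.card) (hXY : Disjoint X Y) :
    Commute (psiProd ψ X) (psiProd ψ Y) := by
  refine Commute.list_prod_right _ _ fun A hA => ?_
  obtain ⟨i, hi, rfl⟩ := List.mem_map.1 hA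
  have hiX : i ∉ X := Finset.disjoint_right.1 hXY ((Finset.mem_sort _).1 hi)
  have h := hψ.mul_psiProd_eq_smul i X
  rw [Finset.erase_eq_of_notMem hiX, hX.neg_one_pow, one_smul] at h
  exact h.symm

theorem exists_mul_psiProd_eq_smul (i : Fin N) (Y : Finset (Fin N)) :
    ∃ c : ℂ, ∃ Z ⊆ insert i Y, ψ i * psiProd ψ Y = c • psiProd ψ Z := by
  induction Y using Finset.induction_on_min with
  | empty => exact ⟨1, {i}, subset_rfl, by rw [psiProd_empty, psiProd_singleton, mul_one, one_smul]⟩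
  | insert a s has ih =>
    rcases lt_trichotomy i a with hia | rfl | hia
    · have h_min : ∀ x ∈ insert a s, i < x := by
        simpa only [Finset.forall_mem_insert] using ⟨hia, fun x hx => hia.trans (has x hx)⟩
      exact ⟨1, _, subset_rfl, by rw [psiProd_insert h_min, one_smul]⟩
    · refine ⟨1, s, (Finset.subset_insert i s).trans (Finset.subset_insert i _), ?_⟩
      rw [psiProd_insert has, ← mul_assoc, hψ.mul_self, one_mul, one_smul]
    · obtain ⟨c, Z, hZ, hc⟩ := ih
      have h_min : ∀ x ∈ Z, a < x := fun x hx =>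
        (Finset.mem_insert.1 (hZ hx)).elim (fun h => h ▸ hia) (has x)
      refine ⟨-c, insert a Z, ?_, ?_⟩
      · rw [Finset.insert_comm]
        exact Finset.insert_subset_insert a hZ
      · rw [psiProd_insert has, psiProd_insert h_min, ← mul_assoc, hψ.mul_eq_neg hia.ne', neg_mul,
          mul_assoc, hc, mul_smul_comm, neg_smul]

theorem exists_psiProd_mul_psiProd_eq_smul (X Y : Finset (Fin N)) :
    ∃ c : ℂ, ∃ Z ⊆ X ∪ Y, psiProd ψ X * psiProd ψ Y = c • psiProd ψ Z := by
  induction X using Finset.induction_on_min with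
  | empty => exact ⟨1, Y, by simp, by rw [psiProd_empty, one_mul, one_smul]⟩
  | insert a s has ih =>
    obtain ⟨c, Z, hZ, hc⟩ := ih
    obtain ⟨c', Z', hZ', hc'⟩ := hψ.exists_mul_psiProd_eq_smul a Z
    refine ⟨c * c', Z', hZ'.trans ?_, ?_⟩
    · rw [Finset.insert_union]
      exact Finset.insert_subset_insert a hZ
    · rw [psiProd_insert has, mul_assoc, hc, mul_smul_comm, hc', smul_smul]

omit hψ in
theorem exists_odd_card_erase_add (hN : Even N) {X Y : Finset (Fin N)} (hXY : X ≠ Y) :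
    ∃ i, Odd ((X.erase i).card + (Y.erase i).card) := by
  by_contra! h
  have h_iff (i : Fin N) : (i ∈ X ↔ i ∈ Y) ↔ Even (X.card + Y.card) := by
    have hi := Nat.not_odd_iff_even.1 (h i)
    grind [Finset.card_erase_add_one, Finset.erase_eq_of_notMem]
  have h_compl : Y = Xᶜ := Finset.ext fun i => by
    have h_odd : ¬ Even (X.card + Y.card) := fun he => hXY (Finset.ext fun i => (h_iff i).2 he)
    have hi := (h_iff i).not.2 h_odd
    rw [Finset.mem_compl]
    tauto
  refine hXY (Finset.ext fun i => (h_iff i).2 ?_)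
  rwa [h_compl, Finset.card_add_card_compl, Fintype.card_fin]

open scoped Matrix.Norms.Frobenius
attribute [local instance] frobeniusInnerProductSpace

-- Conjugation by a single `ψ i` multiplies `ψ_X` and `ψ_Y` by opposite signs for a suitable `i`.
theorem inner_psiProd_eq_zero (hN : Even N) {X Y : Finset (Fin N)} (hXY : X ≠ Y) :
    inner ℂ (psiProd ψ X) (psiProd ψ Y) = 0 := by
  obtain ⟨i, hi⟩ := exists_odd_card_erase_add hN hXY
  refine self_eq_neg.1 ?_
  calc inner ℂ (psiProd ψ X) (psiProd ψ Y)
      = inner ℂ (ψ i * psiProd ψ X) (ψ i * psiProd ψ Y) :=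
        (inner_unitary_mul (hψ.mem_unitary i) _ _).symm
    _ = (-1) ^ ((X.erase i).card + (Y.erase i).card) *
          inner ℂ (psiProd ψ X * ψ i) (psiProd ψ Y * ψ i) := by
        rw [hψ.mul_psiProd_eq_smul, hψ.mul_psiProd_eq_smul, inner_smul_left, inner_smul_right,
          map_pow, map_neg, map_one, ← mul_assoc, ← pow_add]
    _ = -inner ℂ (psiProd ψ X) (psiProd ψ Y) := by
        rw [hi.neg_one_pow, neg_one_mul, inner_mul_unitary (hψ.mem_unitary i)]

end IsMajorana

end Majorana

section SizeFiltration

variable {N : ℕ} {ψ : Fin N → MajoranaOp N}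

/-- The operators of size at most `m`. -/
noncomputable def sizeLESpan (ψ : Fin N → MajoranaOp N) (m : ℕ) : Submodule ℂ (MajoranaOp N) :=
  Submodule.span ℂ {M | ∃ Y : Finset (Fin N), Y.card ≤ m ∧ M = psiProd ψ Y}

theorem psiProd_mem_sizeLESpan {Y : Finset (Fin N)} {m : ℕ} (hY : Y.card ≤ m) :
    psiProd ψ Y ∈ sizeLESpan ψ m :=
  Submodule.subset_span ⟨Y, hY, rfl⟩

theorem IsMajorana.mul_mem_sizeLESpan (hψ : IsMajorana ψ) {A B : MajoranaOp N} {m n : ℕ}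
    (hA : A ∈ sizeLESpan ψ m) (hB : B ∈ sizeLESpan ψ n) : A * B ∈ sizeLESpan ψ (m + n) := by
  have h_le : sizeLESpan ψ m * sizeLESpan ψ n ≤ sizeLESpan ψ (m + n) := by
    rw [sizeLESpan, sizeLESpan, Submodule.span_mul_span, Submodule.span_le]
    rintro _ ⟨_, ⟨X, hX, rfl⟩, _, ⟨Y, hY, rfl⟩, rfl⟩
    obtain ⟨c, Z, hZ, hc⟩ := hψ.exists_psiProd_mul_psiProd_eq_smul X Y
    change psiProd ψ X * psiProd ψ Y ∈ sizeLESpan ψ (m + n)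
    rw [hc]
    exact Submodule.smul_mem _ c (psiProd_mem_sizeLESpan
      ((Finset.card_le_card hZ).trans ((Finset.card_union_le X Y).trans (Nat.add_le_add hX hY))))
  exact h_le (Submodule.mul_mem_mul hA hB)

attribute [local instance] LieRing.ofAssociativeRing

theorem IsMajorana.pow_ad_mem_sizeLESpan (hψ : IsMajorana ψ) {H A : MajoranaOp N} {m q : ℕ}
    (hH : H ∈ sizeLESpan ψ q) (hA : A ∈ sizeLESpan ψ m) (k : ℕ) :
    (LieAlgebra.ad ℂ (MajoranaOp N) H ^ k) A ∈ sizeLESpan ψ (m + k * q) := by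
  induction k with
  | zero => rwa [zero_mul, add_zero, pow_zero, Module.End.one_apply]
  | succ k ih =>
    have h_size : m + (k + 1) * q = q + (m + k * q) := by ring
    rw [pow_succ', h_size]
    exact Submodule.sub_mem _ (hψ.mul_mem_sizeLESpan hH ih)
      (add_comm q _ ▸ hψ.mul_mem_sizeLESpan ih hH)

end SizeFiltration

section Hamiltonian

variable {N q : ℕ} {ψ : Fin N → MajoranaOp N}

theorem card_edges_mem_le (i : Fin N) :
    (Finset.univ.filter fun X : {X : Finset (Fin N) // X.card = q} => i ∈ X.1).card ≤
      (N - 1).choose (q - 1) := by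
  calc _ ≤ (Finset.powersetCard (q - 1) (Finset.univ.erase i)).card := by
        refine Finset.card_le_card_of_injOn (fun X => X.1.erase i) (fun X hX => ?_)
          fun X hX Y hY hXY => Subtype.ext ?_
        · rw [Finset.coe_filter_univ, Set.mem_ofPred_eq] at hX
          rw [Finset.mem_coe, Finset.mem_powersetCard, Finset.card_erase_of_mem hX, X.2]
          exact ⟨Finset.erase_subset_erase i (Finset.subset_univ _), rfl⟩
        · rw [Finset.coe_filter_univ, Set.mem_ofPred_eq] at hX hY
          exact Finset.erase_injOn' i hX hY hXY
    _ = (N - 1).choose (q - 1) := by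
        rw [Finset.card_powersetCard, Finset.card_erase_of_mem (Finset.mem_univ i),
          Finset.card_univ, Fintype.card_fin]

theorem sykSigma_sq_mul_le (N q : ℕ) :
    sykSigma N q ^ 2 * (q * (N - 1).choose (q - 1)) ≤ 1 := by
  rw [sykSigma, inv_pow, Real.sq_sqrt (by positivity), mul_assoc 2]
  set x : ℝ := q * (N - 1).choose (q - 1)
  have hx : 0 ≤ x := by positivity
  calc (2 * x)⁻¹ * x ≤ (2 * x)⁻¹ * (2 * x) := by gcongr; linarith
    _ ≤ 1 := inv_mul_le_one

theorem sykSigma_nonneg (N q : ℕ) : 0 ≤ sykSigma N q := inv_nonneg.2 (Real.sqrt_nonneg _)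

theorem sykSigma_le_one (N q : ℕ) : sykSigma N q ≤ 1 := by
  rw [sykSigma, ← Real.sqrt_inv, Real.sqrt_le_one]
  exact_mod_cast Nat.cast_inv_le_one (α := ℝ) (2 * q * (N - 1).choose (q - 1))

/-- The interaction term `i^{q/2} σ ψ_X` of the hyperedge `X`, without its random sign. -/
noncomputable def sykTerm (q : ℕ) (ψ : Fin N → MajoranaOp N)
    (X : {X : Finset (Fin N) // X.card = q}) : MajoranaOp N :=
  (Complex.I ^ (q / 2) * sykSigma N q) • psiProd ψ X.1

theorem sykH_eq_sum (ε : {X : Finset (Fin N) // X.card = q} → Bool) :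
    sykH q ψ ε = ∑ X, rademacher (ε X) • sykTerm q ψ X := by
  rw [sykH, Finset.smul_sum]
  refine Finset.sum_congr rfl fun X _ => ?_
  rw [sykTerm, ← Complex.coe_smul, smul_smul, smul_smul]
  congr 1
  cases ε X <;> simp [rademacher]

theorem sykH_mem_sizeLESpan (ε : {X : Finset (Fin N) // X.card = q} → Bool) :
    sykH q ψ ε ∈ sizeLESpan ψ q :=
  Submodule.smul_mem _ _ <| Submodule.sum_mem _ fun X _ =>
    Submodule.smul_mem _ _ (psiProd_mem_sizeLESpan X.2.le)

theorem choose_two_add_self (p : ℕ) : (p + p).choose 2 + p = 2 * p ^ 2 := by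
  induction p with
  | zero => rfl
  | succ p ih =>
    rw [show p + 1 + (p + 1) = p + p + 1 + 1 by ring, Nat.choose_succ_succ' _ 1,
      Nat.choose_succ_succ' _ 1, Nat.choose_one_right, Nat.choose_one_right]
    linarith

theorem IsMajorana.isHermitian_sykH (hψ : IsMajorana ψ) (hq : Even q)
    (ε : {X : Finset (Fin N) // X.card = q} → Bool) : (sykH q ψ ε).IsHermitian := by
  have h_sign : (-1 : ℂ) ^ (q / 2) * (-1) ^ q.choose 2 = 1 := by
    obtain ⟨p, rfl⟩ := hq
    rw [← two_mul, Nat.mul_div_cancel_left p two_pos, two_mul, ← pow_add, add_comm,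
      choose_two_add_self, pow_mul, neg_one_sq, one_pow]
  rw [sykH_eq_sum]
  refine isSelfAdjoint_sum _ fun X _ => IsSelfAdjoint.smul (IsSelfAdjoint.all _) ?_
  rw [sykTerm, IsSelfAdjoint, star_smul, star_eq_conjTranspose, hψ.conjTranspose_psiProd, X.2,
    smul_smul]
  congr 1
  calc star (Complex.I ^ (q / 2) * sykSigma N q) * (-1) ^ q.choose 2
      = ((-1) ^ (q / 2) * (-1) ^ q.choose 2) * (Complex.I ^ (q / 2) * sykSigma N q) := by
        rw [star_mul', star_pow, Complex.star_def, Complex.conj_I,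
          Complex.conj_ofReal, neg_pow]
        ring
    _ = Complex.I ^ (q / 2) * sykSigma N q := by rw [h_sign, one_mul]

attribute [local instance] LieRing.ofAssociativeRing
open scoped Matrix.Norms.Frobenius
attribute [local instance] frobeniusInnerProductSpace

theorem IsMajorana.sum_norm_sq_pow_ad_le (hψ : IsMajorana ψ) (hq : Even q) (hq0 : 0 < q)
    (i : Fin N) (k : ℕ) :
    ∑ ε, ‖(LieAlgebra.ad ℂ (MajoranaOp N) (sykH q ψ ε) ^ k) (ψ i)‖ ^ 2 ≤
      2 ^ Fintype.card {X : Finset (Fin N) // X.card = q} *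
        (64 ^ k * k.factorial ^ 2 * ‖ψ i‖ ^ 2) := by
  have h_ad (ε : {X : Finset (Fin N) // X.card = q} → Bool) :
      LieAlgebra.ad ℂ (MajoranaOp N) (sykH q ψ ε) =
        ∑ X, rademacher (ε X) • LieAlgebra.ad ℂ (MajoranaOp N) (sykTerm q ψ X) := by
    rw [sykH_eq_sum, map_sum]
    exact Finset.sum_congr rfl fun X _ => LinearMap.map_smul_of_tower _ _ _
  have h_norm (X : {X : Finset (Fin N) // X.card = q}) (A : MajoranaOp N) :
      ‖LieAlgebra.ad ℂ (MajoranaOp N) (sykTerm q ψ X) A‖ ≤ 2 * sykSigma N q * ‖A‖ := by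
    refine (norm_ad_smul_unitary_le (hψ.psiProd_mem_unitary _) _ _).trans_eq ?_
    rw [norm_mul, norm_pow, Complex.norm_I, one_pow, one_mul, Complex.norm_real,
      Real.norm_of_nonneg (sykSigma_nonneg N q)]
  have h_edge (X Y : {X : Finset (Fin N) // X.card = q}) (hXY : Disjoint X.1 Y.1) :
      Commute (sykTerm q ψ X) (sykTerm q ψ Y) :=
    ((hψ.commute_psiProd (by rwa [X.2]) hXY).smul_left _).smul_right _
  have h_start (X : {X : Finset (Fin N) // X.card = q}) (hX : Disjoint X.1 {i}) :
      Commute (sykTerm q ψ X) (ψ i) := by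
    rw [← psiProd_singleton (ψ := ψ)]
    exact (hψ.commute_psiProd (by rwa [X.2]) hX).smul_left _
  simp only [h_ad]
  exact sum_norm_sq_pow_apply_le (𝕜 := ℂ) (e := Subtype.val) (S := {i})
    (sykSigma_nonneg N q) (sykSigma_le_one N q) h_norm
    (prod_ad_apply_eq_zero h_edge h_start) (fun X => X.2.le) (by rwa [Finset.card_singleton])
    card_edges_mem_le (sykSigma_sq_mul_le N q) k

end Hamiltonian

section SizeProjections

open scoped Matrix.Norms.Frobenius
attribute [local instance] frobeniusInnerProductSpace

variable {N : ℕ} {ψ : Fin N → MajoranaOp N}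
  {Qs : ℕ → MajoranaOp N →ₗ[ℂ] MajoranaOp N}

/-- `Qs s` is the orthogonal projection onto the operators of size `s`, for every `s`. -/
structure IsSizeProjection (ψ : Fin N → MajoranaOp N)
    (Qs : ℕ → MajoranaOp N →ₗ[ℂ] MajoranaOp N) : Prop where
  mem : ∀ s A, Qs s A ∈ sizeSpan ψ s
  orth : ∀ s A, ∀ B ∈ sizeSpan ψ s, mInner N B (A - Qs s A) = 0

theorem mInner_eq (A B : MajoranaOp N) : mInner N A B = (2 ^ (N / 2))⁻¹ * inner ℂ A B := rfl

theorem IsMajorana.norm_sq (hψ : IsMajorana ψ) (i : Fin N) : ‖ψ i‖ ^ 2 = 2 ^ (N / 2) := by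
  rw [← mul_one (ψ i), norm_unitary_mul (hψ.mem_unitary i), norm_sq_eq_re_inner (𝕜 := ℂ),
    frobenius_inner_eq, conjTranspose_one, one_mul, trace_one, Fintype.card_fin]
  norm_cast

theorem orthogonalFamily_sizeSpan (hN : Even N) (hψ : IsMajorana ψ) :
    OrthogonalFamily ℂ (fun s => sizeSpan ψ s) fun s => (sizeSpan ψ s).subtypeₗᵢ := by
  refine OrthogonalFamily.of_pairwise fun s t hst => ?_
  rw [Function.onFun, sizeSpan, sizeSpan, Submodule.isOrtho_span]
  rintro _ ⟨X, rfl, rfl⟩ _ ⟨Y, rfl, rfl⟩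
  exact hψ.inner_psiProd_eq_zero hN fun h => hst (h ▸ rfl)

namespace IsSizeProjection

variable (hQ : IsSizeProjection ψ Qs)
include hQ

theorem inner_sub_eq_zero (s : ℕ) (A : MajoranaOp N) {B : MajoranaOp N}
    (hB : B ∈ sizeSpan ψ s) : inner ℂ B (A - Qs s A) = 0 :=
  (mul_eq_zero.1 (hQ.orth s A B hB)).resolve_left (inv_ne_zero (pow_ne_zero _ two_ne_zero))

theorem inner_apply_self (s : ℕ) (A : MajoranaOp N) : inner ℂ A (Qs s A) = (‖Qs s A‖ : ℂ) ^ 2 := by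
  have h := hQ.inner_sub_eq_zero s A (hQ.mem s A)
  rw [inner_sub_right, sub_eq_zero, inner_self_eq_norm_sq_to_K] at h
  rw [← inner_conj_symm, h, map_pow, RCLike.conj_ofReal]
  rfl

theorem re_mInner_sum (A : MajoranaOp N) (I : Finset ℕ) :
    (mInner N A ((∑ s ∈ I, Qs s) A)).re = (2 ^ (N / 2))⁻¹ * ∑ s ∈ I, ‖Qs s A‖ ^ 2 := by
  rw [mInner_eq, LinearMap.sum_apply, inner_sum,
    Finset.sum_congr rfl fun s _ => hQ.inner_apply_self s A]
  rw [← Complex.ofReal_re ((2 ^ (N / 2))⁻¹ * ∑ s ∈ I, ‖Qs s A‖ ^ 2)]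
  push_cast
  rfl

theorem apply_eq_zero (hN : Even N) (hψ : IsMajorana ψ) {A : MajoranaOp N} {m s : ℕ}
    (hA : A ∈ sizeLESpan ψ m) (hms : m < s) : Qs s A = 0 := by
  refine LinearMap.mem_ker.1 ((Submodule.span_le (p := LinearMap.ker (Qs s))).2 ?_ hA)
  rintro _ ⟨Y, hY, rfl⟩
  have h_ortho : inner ℂ (psiProd ψ Y) (Qs s (psiProd ψ Y)) = 0 :=
    (orthogonalFamily_sizeSpan hN hψ) (hY.trans_lt hms).ne
      ⟨_, Submodule.subset_span ⟨Y, rfl, rfl⟩⟩ ⟨_, hQ.mem s _⟩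
  rw [hQ.inner_apply_self] at h_ortho
  exact norm_eq_zero.1 (by exact_mod_cast eq_zero_of_pow_eq_zero h_ortho)

theorem norm_sq_sum_apply (hN : Even N) (hψ : IsMajorana ψ) (I : Finset ℕ) (A : MajoranaOp N) :
    ‖(∑ s ∈ I, Qs s) A‖ ^ 2 = ∑ s ∈ I, ‖Qs s A‖ ^ 2 := by
  rw [LinearMap.sum_apply]
  exact (orthogonalFamily_sizeSpan hN hψ).norm_sum (fun s => ⟨Qs s A, hQ.mem s A⟩) I

theorem norm_sum_apply_le (hN : Even N) (hψ : IsMajorana ψ) (I : Finset ℕ) (A : MajoranaOp N) :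
    ‖(∑ s ∈ I, Qs s) A‖ ≤ ‖A‖ := by
  set B := (∑ s ∈ I, Qs s) A
  have h_inner : inner ℂ A B = ((‖B‖ ^ 2 : ℝ) : ℂ) := by
    rw [hQ.norm_sq_sum_apply hN hψ]
    push_cast
    rw [← Finset.sum_congr rfl fun s _ => hQ.inner_apply_self s A, ← inner_sum,
      ← LinearMap.sum_apply]
  have h_sq : ‖B‖ ^ 2 ≤ ‖A‖ * ‖B‖ := by
    simpa [h_inner] using norm_inner_le_norm (𝕜 := ℂ) A B
  rcases (norm_nonneg B).eq_or_lt with hB | hB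
  · rw [← hB]; positivity
  · exact le_of_mul_le_mul_right (by rwa [← sq]) hB

end IsSizeProjection

end SizeProjections

section AnalyticContinuation

variable {E : Type*} [NormedAddCommGroup E] [NormedSpace ℝ E] {u : ℕ → ℝ → E}

theorem hasDerivAt_pow_div_factorial (n : ℕ) (x : ℝ) :
    HasDerivAt (fun x : ℝ => x ^ (n + 1) / (n + 1).factorial) (x ^ n / n.factorial) x := by
  refine ((hasDerivAt_pow (n + 1) x).div_const _).congr_deriv ?_
  rw [Nat.factorial_succ, Nat.add_sub_cancel]
  push_cast
  field_simp

theorem norm_le_taylor_sum (hu : ∀ k t, HasDerivAt (u k) (u (k + 1) t) t) {n : ℕ} {C : ℝ}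
    (hC : ∀ t, ‖u n t‖ ≤ C) (t : ℝ) {h : ℝ} (hh : 0 ≤ h) :
    ‖u 0 (t + h)‖ ≤ ∑ i ∈ Finset.range n, ‖u i t‖ * (h ^ i / i.factorial) +
      C * (h ^ n / n.factorial) := by
  induction n generalizing u h with
  | zero => simpa using hC (t + h)
  | succ n ih =>
    have h_deriv (x : ℝ) : HasDerivAt (fun x => u 0 (t + x)) (u 1 (t + x)) x :=
      (hu 0 (t + x)).comp_const_add t x
    have h_bound (x : ℝ) : HasDerivAt
        (fun x => ∑ i ∈ Finset.range (n + 1), ‖u i t‖ * (x ^ i / i.factorial) +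
          C * (x ^ (n + 1) / (n + 1).factorial))
        (∑ i ∈ Finset.range n, ‖u (i + 1) t‖ * (x ^ i / i.factorial) +
          C * (x ^ n / n.factorial)) x := by
      simp only [Finset.sum_range_succ' _ n, pow_zero]
      exact ((HasDerivAt.fun_sum fun i _ =>
        (hasDerivAt_pow_div_factorial i x).const_mul _).add_const _).add
          ((hasDerivAt_pow_div_factorial n x).const_mul C)
    refine image_norm_le_of_norm_deriv_right_le_deriv_boundary (a := 0) (b := h)
      (fun x _ => (h_deriv x).continuousAt.continuousWithinAt)
      (fun x _ => (h_deriv x).hasDerivWithinAt) ?_ h_bound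
      (fun x hx => ih (fun k => hu (k + 1)) hC hx.1) ⟨hh, le_rfl⟩
    simp [Finset.sum_range_succ' _ n]

variable {A M : ℝ}

theorem pow_mul_factorial_add_mul_le (hA : 0 < A) {h : ℝ} (hh : 0 ≤ h) (hhA : h ≤ 1 / (8 * A))
    (k i : ℕ) :
    A ^ (k + i) * (k + i).factorial * (h ^ i / i.factorial) ≤
      A ^ k * k.factorial * (2 ^ k * (1 / 4) ^ i) := by
  have h_choose : (k + i).factorial = ((k + i).choose i : ℝ) * k.factorial * i.factorial :=
    mod_cast (Nat.add_choose_mul_factorial_mul_factorial k i).symm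
  have h_choose_le : ((k + i).choose i : ℝ) ≤ 2 ^ (k + i) := mod_cast Nat.choose_le_two_pow _ _
  have h_Ah : A * h ≤ 1 / 8 := by
    calc A * h ≤ A * (1 / (8 * A)) := by gcongr
      _ = 1 / 8 := by field_simp
  calc A ^ (k + i) * (k + i).factorial * (h ^ i / i.factorial)
      = A ^ k * k.factorial * ((k + i).choose i * (A * h) ^ i) := by
        rw [h_choose, mul_pow, pow_add]; field_simp
    _ ≤ A ^ k * k.factorial * (2 ^ (k + i) * (1 / 8) ^ i) := by gcongr
    _ = A ^ k * k.factorial * (2 ^ k * (1 / 4) ^ i) := by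
        rw [pow_add, mul_assoc ((2 : ℝ) ^ k), ← mul_pow]; norm_num

theorem norm_add_le_of_norm_le_factorial (hu : ∀ k t, HasDerivAt (u k) (u (k + 1) t) t)
    (hA : 0 < A) (hM : 0 ≤ M) {η : ℝ} (hη : 0 ≤ η) {k j : ℕ}
    (h_top : ∀ t, ‖u (k + j) t‖ ≤ M * (A ^ (k + j) * (k + j).factorial)) {t : ℝ}
    (ht : ∀ i < j, ‖u (k + i) t‖ ≤ η * (A ^ (k + i) * (k + i).factorial))
    {h : ℝ} (hh : 0 ≤ h) (hhA : h ≤ 1 / (8 * A)) :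
    ‖u k (t + h)‖ ≤ A ^ k * k.factorial * (2 ^ k * (2 * η + M * (1 / 4) ^ j)) := by
  have h_term {c : ℝ} (hc : 0 ≤ c) (i : ℕ) :
      c * (A ^ (k + i) * (k + i).factorial) * (h ^ i / i.factorial) ≤
        c * (A ^ k * k.factorial * (2 ^ k * (1 / 4) ^ i)) :=
    (mul_assoc c _ _).trans_le
      (mul_le_mul_of_nonneg_left (pow_mul_factorial_add_mul_le hA hh hhA k i) hc)
  have h_geom : ∑ i ∈ Finset.range j, (1 / 4 : ℝ) ^ i ≤ 2 :=
    (Finset.sum_le_sum fun i _ => by gcongr; norm_num).trans (sum_geometric_two_le j)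
  calc ‖u k (t + h)‖
      ≤ ∑ i ∈ Finset.range j, ‖u (k + i) t‖ * (h ^ i / i.factorial) +
          M * (A ^ (k + j) * (k + j).factorial) * (h ^ j / j.factorial) :=
        norm_le_taylor_sum (u := fun i => u (k + i)) (fun i => hu (k + i)) h_top t hh
    _ ≤ ∑ i ∈ Finset.range j, η * (A ^ k * k.factorial * (2 ^ k * (1 / 4) ^ i)) +
          M * (A ^ k * k.factorial * (2 ^ k * (1 / 4) ^ j)) := by
        refine add_le_add (Finset.sum_le_sum fun i hi => ?_) (h_term hM j)
        refine le_trans ?_ (h_term hη i)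
        exact mul_le_mul_of_nonneg_right (ht i (Finset.mem_range.1 hi)) (by positivity)
    _ = A ^ k * k.factorial *
          (2 ^ k * (η * ∑ i ∈ Finset.range j, (1 / 4 : ℝ) ^ i + M * (1 / 4) ^ j)) := by
        simp only [← Finset.mul_sum]
        ring
    _ ≤ A ^ k * k.factorial * (2 ^ k * (2 * η + M * (1 / 4) ^ j)) := by
        rw [mul_comm 2 η]
        gcongr

theorem two_pow_mul_half_pow_add_le {r k j : ℕ} (hk : k < r) (hj : k + j = 4 * r) :
    (2 : ℝ) ^ k * (2 * (1 / 2) ^ (4 * r) + (1 / 4) ^ j) ≤ (1 / 2) ^ r := by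
  set y : ℝ := (1 / 2) ^ r
  have hy : 0 < y := by positivity
  have hy_half : y ≤ 1 / 2 := pow_le_of_le_one (by norm_num) (by norm_num) (by omega)
  have h_four : (1 / 2 : ℝ) ^ (4 * r) = y ^ 4 := by rw [mul_comm, pow_mul]
  have h_six : (1 / 4 : ℝ) ^ j ≤ y ^ 6 := by
    calc (1 / 4 : ℝ) ^ j ≤ (1 / 4) ^ (3 * r) :=
          pow_le_pow_of_le_one (by norm_num) (by norm_num) (by omega)
      _ = y ^ 6 := by rw [← pow_mul, mul_comm r, show (1 / 4 : ℝ) = (1 / 2) ^ 2 by norm_num,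
          ← pow_mul]; ring_nf
  have h_two : 2 ^ k * 2 * y ≤ 1 := by
    calc 2 ^ k * 2 * y = 2 ^ (k + 1) * y := by rw [pow_succ]
      _ ≤ 2 ^ r * y := by gcongr; exacts [one_le_two, hk]
      _ = 1 := by rw [← mul_pow]; norm_num
  calc (2 : ℝ) ^ k * (2 * (1 / 2) ^ (4 * r) + (1 / 4) ^ j)
      ≤ 2 ^ k * (2 * y ^ 4 + 2 * y ^ 6) := by rw [h_four]; gcongr; linarith [pow_pos hy 6]
    _ = 2 ^ k * 2 * y * (y ^ 2 * (1 + y ^ 2) * y) := by ring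
    _ ≤ 1 * ((1 / 2) ^ 2 * (1 + (1 / 2) ^ 2) * y) := by gcongr
    _ ≤ y := by linarith

theorem norm_le_of_eq_zero_of_norm_le_factorial (hu : ∀ k t, HasDerivAt (u k) (u (k + 1) t) t)
    (hA : 0 < A) (hM : 0 ≤ M) (h_bound : ∀ k t, ‖u k t‖ ≤ M * (A ^ k * k.factorial)) {J r : ℕ}
    (h_zero : ∀ k < 4 ^ J * r, u k 0 = 0) {t : ℝ} (ht : 0 ≤ t) (htJ : t ≤ J * (1 / (8 * A)))
    {k : ℕ} (hk : k < r) :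
    ‖u k t‖ ≤ M * (1 / 2) ^ r * (A ^ k * k.factorial) := by
  induction J generalizing r t k with
  | zero =>
    obtain rfl : t = 0 := le_antisymm (by simpa using htJ) ht
    rw [h_zero k (by simpa using hk), norm_zero]
    positivity
  | succ J ih =>
    obtain ⟨j, hj⟩ : ∃ j, k + j = 4 * r := ⟨4 * r - k, by omega⟩
    rw [pow_succ, mul_assoc] at h_zero
    set τ : ℝ := 1 / (8 * A)
    obtain ⟨t, h, rfl, ht, htJ, hh, hhτ⟩ :
        ∃ s h, t = s + h ∧ 0 ≤ s ∧ s ≤ J * τ ∧ 0 ≤ h ∧ h ≤ τ := by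
      push_cast at htJ
      rcases le_total t (J * τ) with h_le | h_le
      · exact ⟨t, 0, (add_zero t).symm, ht, h_le, le_rfl, by positivity⟩
      · exact ⟨J * τ, t - J * τ, by ring, by positivity, le_rfl, by linarith, by linarith⟩
    calc ‖u k (t + h)‖
        ≤ A ^ k * k.factorial * (2 ^ k * (2 * (M * (1 / 2) ^ (4 * r)) + M * (1 / 4) ^ j)) :=
          norm_add_le_of_norm_le_factorial hu hA hM (by positivity) (h_bound _)
            (fun i hi => ih h_zero ht htJ (by omega)) hh hhτ
      _ = A ^ k * k.factorial * M * (2 ^ k * (2 * (1 / 2) ^ (4 * r) + (1 / 4) ^ j)) := by ring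
      _ ≤ A ^ k * k.factorial * M * (1 / 2) ^ r := by
          gcongr
          exact two_pow_mul_half_pow_add_le hk hj
      _ = M * (1 / 2) ^ r * (A ^ k * k.factorial) := by ring

end AnalyticContinuation

section Heisenberg

attribute [local instance] LieRing.ofAssociativeRing
open scoped Matrix.Norms.Frobenius
attribute [local instance] frobeniusInnerProductSpace

variable {N : ℕ}

theorem heis_eq_exp_smul (H A : MajoranaOp N) (t : ℝ) :
    heis H A t =
      NormedSpace.exp (t • Complex.I • H) * A * NormedSpace.exp (t • -(Complex.I • H)) := by
  rw [heis, neg_smul, smul_neg, mul_comm, mul_smul, Complex.coe_smul]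

theorem heis_zero (H A : MajoranaOp N) : heis H A 0 = A := by
  rw [heis_eq_exp_smul, zero_smul, zero_smul, NormedSpace.exp_zero, one_mul, mul_one]

theorem hasDerivAt_heis_s14 (H A : MajoranaOp N) (t : ℝ) :
    HasDerivAt (heis H A) (heis H (Complex.I • ⁅H, A⁆) t) t := by
  have h_left := hasDerivAt_exp_smul_const (𝕂 := ℝ) (Complex.I • H) t
  have h_right := hasDerivAt_exp_smul_const' (𝕂 := ℝ) (-(Complex.I • H)) t
  have h_heis := (h_left.mul_const A).mul h_right
  refine (h_heis.congr_of_eventuallyEq (.of_forall (heis_eq_exp_smul H A))).congr_deriv ?_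
  rw [heis_eq_exp_smul, Ring.lie_def, smul_sub, ← smul_mul_assoc, ← mul_smul_comm]
  noncomm_ring

theorem norm_heis {H : MajoranaOp N} (hH : H.IsHermitian) (A : MajoranaOp N) (t : ℝ) :
    ‖heis H A t‖ = ‖A‖ := by
  have h_skew : t • Complex.I • H ∈ skewAdjoint (MajoranaOp N) :=
    skewAdjoint.smul_mem t (hH.isSelfAdjoint.smul_mem_skewAdjoint Complex.conj_I)
  have h_left : NormedSpace.exp (t • Complex.I • H) ∈ unitary (MajoranaOp N) :=
    NormedSpace.exp_mem_unitary_of_mem_skewAdjoint h_skew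
  have h_right : NormedSpace.exp (t • -(Complex.I • H)) ∈ unitary (MajoranaOp N) := by
    rw [smul_neg]
    exact NormedSpace.exp_mem_unitary_of_mem_skewAdjoint (neg_mem h_skew)
  rw [heis_eq_exp_smul, norm_mul_unitary h_right, norm_unitary_mul h_left]

theorem hasDerivAt_heis_pow_ad (H A : MajoranaOp N) (k : ℕ) (t : ℝ) :
    HasDerivAt (heis H (Complex.I ^ k • (LieAlgebra.ad ℂ (MajoranaOp N) H ^ k) A))
      (heis H (Complex.I ^ (k + 1) • (LieAlgebra.ad ℂ (MajoranaOp N) H ^ (k + 1)) A) t) t := by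
  refine (hasDerivAt_heis_s14 H _ t).congr_deriv ?_
  rw [lie_smul, smul_smul, ← pow_succ', pow_succ' (LieAlgebra.ad ℂ (MajoranaOp N) H)]
  rfl

theorem norm_apply_heis_le {H : MajoranaOp N} (hH : H.IsHermitian) {A : MajoranaOp N}
    {T : MajoranaOp N →ₗ[ℂ] MajoranaOp N} (hT : ∀ B, ‖T B‖ ≤ ‖B‖) {M C : ℝ} (hM : 0 ≤ M)
    (hC : 0 < C)
    (h_ad : ∀ k, ‖(LieAlgebra.ad ℂ (MajoranaOp N) H ^ k) A‖ ≤ M * (C ^ k * k.factorial))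
    {J r : ℕ} (hr : 0 < r)
    (h_zero : ∀ k < 4 ^ J * r, T ((LieAlgebra.ad ℂ (MajoranaOp N) H ^ k) A) = 0)
    {t : ℝ} (ht : 0 ≤ t) (htJ : t ≤ J * (1 / (8 * C))) :
    ‖T (heis H A t)‖ ≤ M * (1 / 2) ^ r := by
  let u (k : ℕ) (t : ℝ) : MajoranaOp N :=
    T (heis H (Complex.I ^ k • (LieAlgebra.ad ℂ (MajoranaOp N) H ^ k) A) t)
  have h_deriv (k : ℕ) (t : ℝ) : HasDerivAt (u k) (u (k + 1) t) t :=
    (T.restrictScalars ℝ).toContinuousLinearMap.hasFDerivAt.comp_hasDerivAt t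
      (hasDerivAt_heis_pow_ad H A k t)
  have h_bound (k : ℕ) (t : ℝ) : ‖u k t‖ ≤ M * (C ^ k * k.factorial) := by
    refine (hT _).trans ?_
    rw [norm_heis hH, norm_smul, norm_pow, Complex.norm_I, one_pow, one_mul]
    exact h_ad k
  have h_start (k : ℕ) (hk : k < 4 ^ J * r) : u k 0 = 0 := by
    simp only [u, heis_zero, map_smul, h_zero k hk, smul_zero]
  simpa [u] using
    norm_le_of_eq_zero_of_norm_le_factorial h_deriv hC hM h_bound h_start ht htJ hr

end Heisenberg

section Blocks

variable {N q : ℕ}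

theorem Nprime_mono (q : ℕ) : Monotone fun N => Nprime N q := fun _ _ h =>
  Nat.div_le_div_right (by omega)

theorem le_mul_Nprime (hN : 2 ≤ N) (hq : 2 < q) : N ≤ q * Nprime N q := by
  obtain ⟨p, rfl⟩ : ∃ p, q = p + 3 := ⟨q - 3, by omega⟩
  have h_index : Nprime N (p + 3) = (N + p - 1) / (p + 1) := rfl
  have h_pos : 1 ≤ Nprime N (p + 3) := by
    rw [h_index, Nat.le_div_iff_mul_le (by omega)]
    omega
  have h_lt := Nat.lt_mul_div_succ (N + p - 1) p.succ_pos
  rw [Nat.succ_eq_add_one, ← h_index, mul_add] at h_lt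
  have h_split : (p + 3) * Nprime N (p + 3) =
      (p + 1) * Nprime N (p + 3) + 2 * Nprime N (p + 3) := by ring
  omega

theorem Nprime_eq_of_mem_blockR (hq : 2 < q) {l s : ℕ} (hl : l ≤ Nprime N q)
    (hs : s ∈ blockR N q l) : Nprime s q = l := by
  obtain ⟨p, rfl⟩ : ∃ p, q = p + 3 := ⟨q - 3, by omega⟩
  have h_index (m : ℕ) : Nprime m (p + 3) = (m + p - 1) / (p + 1) := rfl
  have h_le_of_lt {k : ℕ} (h : k * (p + 1) + 1 < s) : k + 1 ≤ Nprime s (p + 3) := by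
    rw [h_index, Nat.le_div_iff_mul_le (by omega), add_mul]
    omega
  rw [blockR, show p + 3 - 2 = p + 1 by omega] at hs
  split_ifs at hs with h_zero h_lt
  · rw [Finset.mem_singleton.1 hs, h_zero]
    exact Nat.div_eq_of_lt (by omega)
  · obtain ⟨k, rfl⟩ := Nat.exists_eq_succ_of_ne_zero h_zero
    rw [Nat.succ_eq_add_one, Nat.add_sub_cancel, Finset.mem_Ioc] at hs
    refine le_antisymm (Nat.lt_succ_iff.1 ?_) (h_le_of_lt hs.1)
    rw [h_index, Nat.div_lt_iff_lt_mul (by omega), Nat.succ_mul]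
    omega
  · obtain ⟨k, rfl⟩ := Nat.exists_eq_succ_of_ne_zero h_zero
    rw [← le_antisymm hl (not_lt.1 h_lt), Nat.succ_eq_add_one, Nat.add_sub_cancel,
      Finset.mem_Ioc] at hs
    exact le_antisymm ((Nprime_mono _ hs.2).trans (not_lt.1 h_lt)) (h_le_of_lt hs.1)

theorem sum_mul_sum_blockR (hq : 2 < q) (w : ℕ → ℝ) :
    ∑ l ∈ Finset.range (Nprime N q + 1), l * ∑ s ∈ blockR N q l, w s =
      ∑ s ∈ (Finset.range (Nprime N q + 1)).biUnion (blockR N q), Nprime s q * w s := by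
  have h_index {l : ℕ} (hl : l ∈ Finset.range (Nprime N q + 1)) {s : ℕ}
      (hs : s ∈ blockR N q l) : Nprime s q = l :=
    Nprime_eq_of_mem_blockR hq (Nat.lt_succ_iff.1 (Finset.mem_range.1 hl)) hs
  rw [Finset.sum_biUnion fun l hl m hm hlm => Finset.disjoint_left.2 fun s hs hs' =>
    hlm ((h_index hl hs).symm.trans (h_index hm hs'))]
  refine Finset.sum_congr rfl fun l hl => ?_
  rw [Finset.mul_sum]
  exact Finset.sum_congr rfl fun s hs => by rw [h_index hl hs]

theorem Nprime_le_two_mul (hq : 4 ≤ q) {n s : ℕ} (hs : s ≤ 1 + n * q) : Nprime s q ≤ 2 * n := by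
  obtain ⟨p, rfl⟩ : ∃ p, q = p + 4 := ⟨q - 4, by omega⟩
  rw [← Nat.lt_succ_iff, Nprime, Nat.div_lt_iff_lt_mul (by omega),
    show p + 4 - 2 = p + 2 by omega]
  have h_expand : (2 * n).succ * (p + 2) = n * (p + 4) + n * p + p + 2 := by
    rw [Nat.succ_eq_add_one]
    ring
  omega

theorem sum_mul_sum_blockR_le (hq : 4 ≤ q) {w : ℕ → ℝ} (hw : ∀ s, 0 ≤ w s) {η : ℝ} {n : ℕ}
    (h_total : ∀ I : Finset ℕ, ∑ s ∈ I, w s ≤ 1)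
    (h_tail : ∀ I : Finset ℕ, (∀ s ∈ I, 1 + n * q < s) → ∑ s ∈ I, w s ≤ η) :
    ∑ l ∈ Finset.range (Nprime N q + 1), l * ∑ s ∈ blockR N q l, w s ≤
      2 * n + Nprime N q * η := by
  rw [sum_mul_sum_blockR (by omega)]
  set U := (Finset.range (Nprime N q + 1)).biUnion (blockR N q)
  have h_index {s : ℕ} (hs : s ∈ U) : Nprime s q ≤ Nprime N q := by
    obtain ⟨l, hl, hs⟩ := Finset.mem_biUnion.1 hs
    have hl' := Nat.lt_succ_iff.1 (Finset.mem_range.1 hl)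
    exact (Nprime_eq_of_mem_blockR (by omega) hl' hs).trans_le hl'
  rw [← Finset.sum_filter_add_sum_filter_not U (· ≤ 1 + n * q)]
  refine add_le_add ?_ ?_
  · calc ∑ s ∈ U with s ≤ 1 + n * q, Nprime s q * w s
        ≤ ∑ s ∈ U with s ≤ 1 + n * q, 2 * n * w s := by
          refine Finset.sum_le_sum fun s hs => mul_le_mul_of_nonneg_right ?_ (hw s)
          exact_mod_cast Nprime_le_two_mul hq (Finset.mem_filter.1 hs).2
      _ ≤ 2 * n := by
          rw [← Finset.mul_sum]
          exact mul_le_of_le_one_right (by positivity) (h_total _)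
  · calc ∑ s ∈ U with ¬ s ≤ 1 + n * q, Nprime s q * w s
        ≤ ∑ s ∈ U with ¬ s ≤ 1 + n * q, Nprime N q * w s := by
          refine Finset.sum_le_sum fun s hs => mul_le_mul_of_nonneg_right ?_ (hw s)
          exact_mod_cast h_index (Finset.mem_filter.1 hs).1
      _ ≤ Nprime N q * η := by
          rw [← Finset.mul_sum]
          gcongr
          exact h_tail _ fun s hs => not_le.1 (Finset.mem_filter.1 hs).2

end Blocks

section UnionBound

variable {Ω : Type*} [Fintype Ω]

theorem card_exists_lt_le {Z : ℕ → Ω → ℝ} (hZ : ∀ k ω, 0 ≤ Z k ω) {c : ℝ}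
    (h_sum : ∀ k, ∑ ω, Z k ω ≤ c * (1 / 2) ^ k) :
    (Nat.card {ω // ∃ k, 1 < Z k ω} : ℝ) ≤ 2 * c := by
  classical
  have h_witness (ω : Ω) : ∃ k, (∃ k, 1 < Z k ω) → 1 < Z k ω := by
    by_cases hω : ∃ k, 1 < Z k ω
    · exact hω.imp fun k hk _ => hk
    · exact ⟨0, fun h => absurd h hω⟩
  choose k hk using h_witness
  set n := Finset.univ.sup k + 1
  have h_mem (ω : Ω) : k ω ∈ Finset.range n :=
    Finset.mem_range.2 (Nat.lt_succ_of_le (Finset.le_sup (Finset.mem_univ ω)))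
  have hc : 0 ≤ c := by simpa using (Finset.sum_nonneg fun ω _ => hZ 0 ω).trans (h_sum 0)
  rw [Nat.card_eq_fintype_card, Fintype.card_subtype]
  calc ((Finset.univ.filter fun ω => ∃ k, 1 < Z k ω).card : ℝ)
      = ∑ ω with ∃ k, 1 < Z k ω, 1 := by rw [Finset.sum_const, nsmul_one]
    _ ≤ ∑ ω with ∃ k, 1 < Z k ω, ∑ i ∈ Finset.range n, Z i ω := Finset.sum_le_sum fun ω hω =>
        (hk ω (Finset.mem_filter.1 hω).2).le.trans
          (Finset.single_le_sum (fun i _ => hZ i ω) (h_mem ω))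
    _ ≤ ∑ ω, ∑ i ∈ Finset.range n, Z i ω :=
        Finset.sum_le_univ_sum_of_nonneg fun ω => Finset.sum_nonneg fun i _ => hZ i ω
    _ = ∑ i ∈ Finset.range n, ∑ ω, Z i ω := Finset.sum_comm
    _ ≤ ∑ i ∈ Finset.range n, c * (1 / 2) ^ i := Finset.sum_le_sum fun i _ => h_sum i
    _ ≤ c * 2 := by
        rw [← Finset.mul_sum]
        exact mul_le_mul_of_nonneg_left (sum_geometric_two_le n) hc
    _ = 2 * c := mul_comm c 2

theorem le_card_forall_le_mul {X : ℕ → Ω → ℝ} (hX : ∀ k ω, 0 ≤ X k ω) {a : ℕ → ℝ}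
    (ha : ∀ k, 0 < a k) (h_mean : ∀ k, ∑ ω, X k ω ≤ Fintype.card Ω * a k) {R : ℝ} (hR : 0 < R) :
    Fintype.card Ω * (1 - 2 / R) ≤ Nat.card {ω // ∀ k, X k ω ≤ R * (2 ^ k * a k)} := by
  classical
  let Z (k : ℕ) (ω : Ω) : ℝ := X k ω / (R * (2 ^ k * a k))
  have h_pos (k : ℕ) : 0 < R * (2 ^ k * a k) := mul_pos hR (mul_pos (by positivity) (ha k))
  have h_sum (k : ℕ) : ∑ ω, Z k ω ≤ Fintype.card Ω / R * (1 / 2) ^ k := by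
    rw [← Finset.sum_div, div_le_iff₀ (h_pos k)]
    refine (h_mean k).trans_eq ?_
    rw [one_div, inv_pow]
    field_simp
  have h_bad := card_exists_lt_le (fun k ω => div_nonneg (hX k ω) (h_pos k).le) h_sum
  have h_compl : Nat.card {ω // ∀ k, X k ω ≤ R * (2 ^ k * a k)} + Nat.card {ω // ∃ k, 1 < Z k ω} =
      Fintype.card Ω := by
    simp only [Z, one_lt_div (h_pos _), ← not_le, ← not_forall]
    rw [← Nat.card_eq_fintype_card, ← Nat.card_sum]
    exact Nat.card_congr (Equiv.sumCompl _)
  calc (Fintype.card Ω * (1 - 2 / R) : ℝ) = Fintype.card Ω - 2 * (Fintype.card Ω / R) := by ring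
    _ ≤ Fintype.card Ω - Nat.card {ω // ∃ k, 1 < Z k ω} := sub_le_sub_left h_bad _
    _ = Nat.card {ω // ∀ k, X k ω ≤ R * (2 ^ k * a k)} := by
        rw [← h_compl]
        push_cast
        ring

end UnionBound

section Asymptotics

open Filter Asymptotics

theorem four_pow_ceil_le {x β : ℝ} (hx : 1 ≤ x) (hβ : 0 ≤ β) :
    (4 : ℝ) ^ ⌈β * Real.log x⌉₊ ≤ 4 * x ^ (2 * β) := by
  have h_exponent : 0 ≤ β * Real.log x := mul_nonneg hβ (Real.log_nonneg hx)
  have h_exp : (4 : ℝ) ≤ Real.exp 2 := by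
    rw [show (2 : ℝ) = 1 + 1 by norm_num, Real.exp_add]
    nlinarith [Real.add_one_le_exp 1]
  calc (4 : ℝ) ^ ⌈β * Real.log x⌉₊ = 4 ^ (⌈β * Real.log x⌉₊ : ℝ) := (Real.rpow_natCast _ _).symm
    _ ≤ 4 ^ (β * Real.log x + 1) :=
        Real.rpow_le_rpow_of_exponent_le (by norm_num) (Nat.ceil_lt_add_one h_exponent).le
    _ = 4 * 4 ^ (β * Real.log x) := by
        rw [Real.rpow_add_one four_ne_zero, mul_comm]
    _ ≤ 4 * Real.exp 2 ^ (β * Real.log x) := by gcongr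
    _ = 4 * x ^ (2 * β) := by
        rw [← Real.exp_mul, Real.rpow_def_of_pos (by positivity)]
        ring_nf

theorem rpow_mul_pow_le_inv {x ζ : ℝ} (hx : 0 < x) {r : ℕ} (hr : (ζ + 1) * Real.log x ≤ r) :
    x ^ ζ * (1 / 4) ^ r ≤ x⁻¹ := by
  have h_exp : (1 / 4 : ℝ) ≤ Real.exp (-1) := by
    rw [Real.exp_neg, one_div]
    gcongr
    exact Real.exp_one_lt_three.le.trans (by norm_num)
  calc x ^ ζ * (1 / 4) ^ r ≤ x ^ ζ * Real.exp (-1) ^ r := by gcongr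
    _ = x ^ ζ * Real.exp (-r) := by rw [← Real.exp_nat_mul, mul_neg_one]
    _ ≤ x ^ ζ * Real.exp (-((ζ + 1) * Real.log x)) := by gcongr
    _ = x ^ ζ * x ^ (-(ζ + 1)) := by
        rw [Real.rpow_def_of_pos hx (-(ζ + 1))]
        ring_nf
    _ = x⁻¹ := by
        rw [← Real.rpow_add hx, ← Real.rpow_neg_one]
        ring_nf

theorem eventually_rpow_mul_log_add_le {a s c : ℝ} (hs : 0 < s) (hc : 0 < c) (d : ℝ) :
    ∀ᶠ x : ℝ in atTop, a * Real.log x + d ≤ c * x ^ s := by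
  have h_log := (isLittleO_log_rpow_atTop hs).const_mul_left a
  have h_const : (fun _ => d) =o[atTop] fun x : ℝ => x ^ s :=
    isLittleO_const_left.2
      (.inr (tendsto_norm_atTop_atTop.comp (tendsto_rpow_atTop hs)))
  filter_upwards [(h_log.add h_const).bound hc, eventually_ge_atTop 0] with x h_bound hx
  rw [Real.norm_of_nonneg (Real.rpow_nonneg hx s)] at h_bound
  exact (le_abs_self _).trans h_bound

theorem eventually_exists_stages {α γ κ : ℝ} (hα : α < 1) (hγ : 0 < γ) (hκ : 0 < κ) (ζ : ℝ) :
    ∀ᶠ x : ℝ in atTop, ∃ J r : ℕ, 0 < r ∧ (1 - α) / 384 * Real.log x ≤ J * (1 / 96) ∧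
      ∀ P : ℝ, x ^ (1 - α) ≤ γ * P → 2 * (4 ^ J * r) + P * (x ^ ζ * (1 / 4) ^ r) < κ * P := by
  have h_half : 0 < (1 - α) / 2 := by linarith
  filter_upwards [eventually_ge_atTop 1, eventually_gt_atTop (2 / κ),
    eventually_rpow_mul_log_add_le (a := |ζ + 1|) h_half (c := κ / (16 * γ)) (by positivity) 1]
    with x hx1 hxκ hx_log
  have hx : 0 < x := one_pos.trans_le hx1
  set J := ⌈(1 - α) / 4 * Real.log x⌉₊
  set r := ⌊|ζ + 1| * Real.log x⌋₊ + 1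
  have h_log : 0 ≤ |ζ + 1| * Real.log x := mul_nonneg (abs_nonneg _) (Real.log_nonneg hx1)
  have h_stages : (4 : ℝ) ^ J ≤ 4 * x ^ ((1 - α) / 2) :=
    (four_pow_ceil_le hx1 (by linarith)).trans_eq (by ring_nf)
  have h_order : (r : ℝ) ≤ κ / (16 * γ) * x ^ ((1 - α) / 2) := by
    refine le_trans ?_ hx_log
    push_cast [r]
    linarith [Nat.floor_le h_log]
  have h_decay : x ^ ζ * (1 / 4) ^ r ≤ x⁻¹ := by
    refine rpow_mul_pow_le_inv hx ?_
    push_cast [r]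
    exact (mul_le_mul_of_nonneg_right (le_abs_self _) (Real.log_nonneg hx1)).trans
      (Nat.lt_floor_add_one _).le
  have h_inv : x⁻¹ < κ / 2 := by
    rw [← inv_div]
    exact inv_strictAnti₀ (by positivity) hxκ
  refine ⟨J, r, Nat.succ_pos _, by linarith [Nat.le_ceil ((1 - α) / 4 * Real.log x)], ?_⟩
  intro P hP
  have hP0 : 0 < P := pos_of_mul_pos_right ((Real.rpow_pos_of_pos hx _).trans_le hP) hγ.le
  calc 2 * (4 ^ J * r) + P * (x ^ ζ * (1 / 4) ^ r)
      < 2 * (4 * x ^ ((1 - α) / 2) * (κ / (16 * γ) * x ^ ((1 - α) / 2))) + P * (κ / 2) := by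
        refine add_lt_add_of_le_of_lt ?_ (mul_lt_mul_of_pos_left (h_decay.trans_lt h_inv) hP0)
        gcongr
    _ = κ / (2 * γ) * x ^ (1 - α) + P * (κ / 2) := by
        rw [show (1 - α) = (1 - α) / 2 + (1 - α) / 2 by ring, Real.rpow_add hx]
        ring_nf
    _ ≤ κ / (2 * γ) * (γ * P) + P * (κ / 2) := by gcongr
    _ = κ * P := by field_simp; ring

end Asymptotics

/-- The mean block index `Σ_l l · P_l` of the size distribution `P_l = (A|Q_l A)` of `A`. -/
noncomputable def meanBlock {N : ℕ} (q : ℕ) (Qs : ℕ → MajoranaOp N →ₗ[ℂ] MajoranaOp N)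
    (A : MajoranaOp N) : ℝ :=
  ∑ l ∈ Finset.range (Nprime N q + 1), (l : ℝ) *
    (mInner N A ((∑ s ∈ blockR N q l, Qs s) A)).re

section Scrambling

open scoped Matrix.Norms.Frobenius
attribute [local instance] frobeniusInnerProductSpace
attribute [local instance] LieRing.ofAssociativeRing

variable {N q : ℕ} {ψ : Fin N → MajoranaOp N} {Qs : ℕ → MajoranaOp N →ₗ[ℂ] MajoranaOp N}

theorem meanBlock_le (hN : Even N) (hψ : IsMajorana ψ) (hQ : IsSizeProjection ψ Qs) (hq : 4 ≤ q)
    {A : MajoranaOp N} (hA : ‖A‖ ^ 2 = 2 ^ (N / 2)) {n : ℕ} {η : ℝ}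
    (h_tail : ∀ I : Finset ℕ, (∀ s ∈ I, 1 + n * q < s) →
      ‖(∑ s ∈ I, Qs s) A‖ ^ 2 ≤ η * ‖A‖ ^ 2) :
    meanBlock q Qs A ≤ 2 * n + Nprime N q * η := by
  have h_weight (I : Finset ℕ) : ∑ s ∈ I, (2 ^ (N / 2) : ℝ)⁻¹ * ‖Qs s A‖ ^ 2 =
      ‖(∑ s ∈ I, Qs s) A‖ ^ 2 / ‖A‖ ^ 2 := by
    rw [← Finset.mul_sum, hQ.norm_sq_sum_apply hN hψ, hA, inv_mul_eq_div]
  have h_pos : 0 < ‖A‖ ^ 2 := hA ▸ by positivity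
  have h_mean : meanBlock q Qs A = ∑ l ∈ Finset.range (Nprime N q + 1),
      l * ∑ s ∈ blockR N q l, (2 ^ (N / 2) : ℝ)⁻¹ * ‖Qs s A‖ ^ 2 :=
    Finset.sum_congr rfl fun l _ => by rw [hQ.re_mInner_sum, Finset.mul_sum]
  rw [h_mean]
  refine sum_mul_sum_blockR_le hq (fun s => ?_) (fun I => ?_) fun I hI => ?_
  · positivity
  · rw [h_weight, div_le_one h_pos]
    exact pow_le_pow_left₀ (norm_nonneg _) (hQ.norm_sum_apply_le hN hψ I A) 2
  · rw [h_weight, div_le_iff₀ h_pos]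
    exact h_tail I hI

theorem IsSizeProjection.norm_sum_apply_heis_le (hN : Even N) (hψ : IsMajorana ψ)
    (hQ : IsSizeProjection ψ Qs) {H A : MajoranaOp N} (hH : H.IsHermitian)
    (hH_size : H ∈ sizeLESpan ψ q) {m : ℕ} (hA_size : A ∈ sizeLESpan ψ m) {M C : ℝ} (hM : 0 ≤ M)
    (hC : 0 < C)
    (h_ad : ∀ k, ‖(LieAlgebra.ad ℂ (MajoranaOp N) H ^ k) A‖ ≤ M * (C ^ k * k.factorial))
    {J r : ℕ} (hr : 0 < r) {I : Finset ℕ} (hI : ∀ s ∈ I, m + 4 ^ J * r * q < s)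
    {t : ℝ} (ht : 0 ≤ t) (htJ : t ≤ J * (1 / (8 * C))) :
    ‖(∑ s ∈ I, Qs s) (heis H A t)‖ ≤ M * (1 / 2) ^ r := by
  refine norm_apply_heis_le hH (hQ.norm_sum_apply_le hN hψ I) hM hC h_ad hr (fun k hk => ?_) ht htJ
  rw [LinearMap.sum_apply]
  refine Finset.sum_eq_zero fun s hs => ?_
  exact hQ.apply_eq_zero hN hψ (hψ.pow_ad_mem_sizeLESpan hH_size hA_size k)
    ((Nat.add_le_add_left (Nat.mul_le_mul_right q hk.le) m).trans_lt (hI s hs))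

theorem meanBlock_heis_le (hN : Even N) (hψ : IsMajorana ψ) (hQ : IsSizeProjection ψ Qs)
    (hq_even : Even q) (hq : 4 ≤ q) {ε : {X : Finset (Fin N) // X.card = q} → Bool} {v : Fin N}
    {R : ℝ} (hR : 0 ≤ R)
    (h_ad : ∀ k, ‖(LieAlgebra.ad ℂ (MajoranaOp N) (sykH q ψ ε) ^ k) (ψ v)‖ ^ 2 ≤
      R * (2 ^ k * (64 ^ k * k.factorial ^ 2 * ‖ψ v‖ ^ 2)))
    {J r : ℕ} (hr : 0 < r) {t : ℝ} (ht : 0 ≤ t) (htJ : t ≤ J * (1 / 96)) :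
    meanBlock q Qs (heis (sykH q ψ ε) (ψ v) t) ≤
      2 * (4 ^ J * r) + Nprime N q * (R * (1 / 4) ^ r) := by
  have hH := hψ.isHermitian_sykH hq_even ε
  have h_norm (k : ℕ) : ‖(LieAlgebra.ad ℂ (MajoranaOp N) (sykH q ψ ε) ^ k) (ψ v)‖ ≤
      √R * ‖ψ v‖ * (12 ^ k * k.factorial) := by
    refine le_of_sq_le_sq ?_ (by positivity)
    calc ‖(LieAlgebra.ad ℂ (MajoranaOp N) (sykH q ψ ε) ^ k) (ψ v)‖ ^ 2
        ≤ R * (2 ^ k * (64 ^ k * k.factorial ^ 2 * ‖ψ v‖ ^ 2)) := h_ad k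
      _ = R * ‖ψ v‖ ^ 2 * (128 ^ k * k.factorial ^ 2) := by
          rw [show (128 : ℝ) = 2 * 64 by norm_num, mul_pow]
          ring
      _ ≤ R * ‖ψ v‖ ^ 2 * ((12 ^ 2) ^ k * k.factorial ^ 2) := by gcongr; norm_num
      _ = (√R * ‖ψ v‖ * (12 ^ k * k.factorial)) ^ 2 := by
          simp only [mul_pow, Real.sq_sqrt hR, pow_right_comm]
  have h_mean := meanBlock_le hN hψ hQ hq (A := heis (sykH q ψ ε) (ψ v) t) (n := 4 ^ J * r)
    (η := R * (1 / 4) ^ r) (by rw [norm_heis hH, hψ.norm_sq]) fun I hI => by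
      have h_tail := hQ.norm_sum_apply_heis_le hN hψ hH (sykH_mem_sizeLESpan ε)
        (psiProd_singleton (ψ := ψ) v ▸ psiProd_mem_sizeLESpan (Finset.card_singleton v).le)
        (by positivity) (by norm_num) h_norm hr hI ht (htJ.trans_eq (by norm_num))
      calc ‖(∑ s ∈ I, Qs s) (heis (sykH q ψ ε) (ψ v) t)‖ ^ 2
          ≤ (√R * ‖ψ v‖ * (1 / 2) ^ r) ^ 2 := pow_le_pow_left₀ (norm_nonneg _) h_tail 2
        _ = R * (1 / 4) ^ r * ‖heis (sykH q ψ ε) (ψ v) t‖ ^ 2 := by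
            rw [norm_heis hH, mul_pow, mul_pow, Real.sq_sqrt hR, pow_right_comm,
              show (1 / 2 : ℝ) ^ 2 = 1 / 4 by norm_num]
            ring
  exact_mod_cast h_mean

theorem IsMajorana.le_card_norm_sq_pow_ad_le (hψ : IsMajorana ψ) (hq_even : Even q) (hq : 0 < q)
    (v : Fin N) {R : ℝ} (hR : 0 < R) :
    2 ^ Nat.card {X : Finset (Fin N) // X.card = q} * (1 - 2 / R) ≤
      Nat.card {ε : {X : Finset (Fin N) // X.card = q} → Bool //
        ∀ k, ‖(LieAlgebra.ad ℂ (MajoranaOp N) (sykH q ψ ε) ^ k) (ψ v)‖ ^ 2 ≤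
          R * (2 ^ k * (64 ^ k * k.factorial ^ 2 * ‖ψ v‖ ^ 2))} := by
  have h_card : (Fintype.card ({X : Finset (Fin N) // X.card = q} → Bool) : ℝ) =
      2 ^ Nat.card {X : Finset (Fin N) // X.card = q} := by
    rw [Fintype.card_fun, Fintype.card_bool, Nat.card_eq_fintype_card, Nat.cast_pow, Nat.cast_ofNat]
  have h_pos : 0 < ‖ψ v‖ ^ 2 := hψ.norm_sq v ▸ by positivity
  rw [← h_card]
  refine le_card_forall_le_mul (fun k ε => by positivity) (fun k => by positivity) (fun k => ?_) hR
  rw [h_card, Nat.card_eq_fintype_card]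
  exact hψ.sum_norm_sq_pow_ad_le hq_even hq v k

theorem le_card_forall_scrambled_le (hN : Even N) (hψ : IsMajorana ψ)
    (hQ : IsSizeProjection ψ Qs) (hq_even : Even q) (hq : 4 ≤ q) (v : Fin N) {R c τ : ℝ}
    (hR : 0 < R) {J r : ℕ} (hr : 0 < r) (hτ : τ ≤ J * (1 / 96))
    (hc : 2 * (4 ^ J * r) + Nprime N q * (R * (1 / 4) ^ r) < c) :
    1 - 2 / R ≤
      (Nat.card {ε : {X : Finset (Fin N) // X.card = q} → Bool //
          ∀ t : ℝ, 0 < t → c ≤ meanBlock q Qs (heis (sykH q ψ ε) (ψ v) t) → τ ≤ t} : ℝ) /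
        2 ^ Nat.card {X : Finset (Fin N) // X.card = q} := by
  rw [le_div_iff₀' (by positivity)]
  refine (hψ.le_card_norm_sq_pow_ad_le hq_even (by omega) v hR).trans (Nat.cast_le.2 ?_)
  refine Nat.card_le_card_of_injective _ (Subtype.impEmbedding _ _ fun ε h_ad t ht h_le => ?_).2
  refine hτ.trans (le_of_not_ge fun htJ => ?_)
  exact (h_le.trans (meanBlock_heis_le hN hψ hQ hq_even hq hR.le h_ad hr ht.le htJ)).not_gt hc

end Scrambling

open Filter in
theorem syk_fast_scrambling_general (α γ κ ζ : ℝ) (hα : α < 1) (hγ : 0 < γ) (hκ : 0 < κ) :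
    ∀ᶠ N : ℕ in atTop, Even N → ∀ q : ℕ, Even q → 2 < q → (q : ℝ) < γ * (N : ℝ) ^ α →
      ∀ ψ : Fin N → MajoranaOp N, IsMajorana ψ → ∀ v : Fin N,
      ∀ Qs : ℕ → MajoranaOp N →ₗ[ℂ] MajoranaOp N, IsSizeProjection ψ Qs →
      1 - 2 / (N : ℝ) ^ ζ ≤
        (Nat.card {ε : {X : Finset (Fin N) // X.card = q} → Bool // ∀ t : ℝ, 0 < t →
            κ * (Nprime N q : ℝ) ≤ meanBlock q Qs (heis (sykH q ψ ε) (ψ v) t) →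
            (1 - α) / 384 * Real.log N ≤ t} : ℝ) /
          2 ^ Nat.card {X : Finset (Fin N) // X.card = q} := by
  filter_upwards [tendsto_natCast_atTop_atTop.eventually (eventually_exists_stages hα hγ hκ ζ),
    eventually_ge_atTop 2] with N h_stages hN2 hN q hq_even hq hqN ψ hψ v Qs hQ
  obtain ⟨J, r, hr, hτ, h_lt⟩ := h_stages
  have hN0 : (0 : ℝ) < N := by positivity
  have h_blocks : (N : ℝ) ^ (1 - α) ≤ γ * Nprime N q := by
    rw [Real.rpow_sub hN0, Real.rpow_one, div_le_iff₀ (Real.rpow_pos_of_pos hN0 α)]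
    calc (N : ℝ) ≤ q * Nprime N q := by exact_mod_cast le_mul_Nprime hN2 hq
      _ ≤ γ * N ^ α * Nprime N q := by gcongr
      _ = γ * Nprime N q * N ^ α := mul_right_comm _ _ _
  have hq_four : 4 ≤ q := by
    obtain ⟨p, rfl⟩ := hq_even
    omega
  exact le_card_forall_scrambled_le hN hψ hQ hq_even hq_four v (Real.rpow_pos_of_pos hN0 ζ) hr hτ
    (h_lt _ h_blocks)

/-- Fast scrambling in the SYK model: for `q < γ N^{(1−δ)/6}`, with probability at least
`1 − 2(q−2)/(N^ζ − 1)` over the couplings, the operator scrambling time of a single fermion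
satisfies `t_{s,κ} ≥ b log N`. -/
theorem syk_fast_scrambling (γ δ κ : ℝ) (hγ : 0 < γ) (hδ : 0 < δ)
    (hκ0 : 0 < κ) (hκ1 : κ < 1) :
    ∃ b : ℝ, 0 < b ∧ ∃ ζ : ℝ, 0 < ζ ∧ ∃ N₀ : ℕ, 0 < N₀ ∧
      ∀ N : ℕ, N₀ < N → Even N →
      ∀ q : ℕ, Even q → 2 < q → (q : ℝ) < γ * (N : ℝ) ^ ((1 - δ) / 6) →
      ∀ hqN : 2 * q < N,
      ∀ ψ : Fin N → Matrix (Fin (2 ^ (N / 2))) (Fin (2 ^ (N / 2))) ℂ,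
      (∀ i, (ψ i).IsHermitian) →
      (∀ i j, ψ i * ψ j + ψ j * ψ i =
        (if i = j then (2 : ℂ) else 0) •
          (1 : Matrix (Fin (2 ^ (N / 2))) (Fin (2 ^ (N / 2))) ℂ)) →
      ∀ Qs : ℕ → (Matrix (Fin (2 ^ (N / 2))) (Fin (2 ^ (N / 2))) ℂ →ₗ[ℂ]
        Matrix (Fin (2 ^ (N / 2))) (Fin (2 ^ (N / 2))) ℂ),
      (∀ s A, Qs s A ∈ sizeSpan ψ s) →
      (∀ s A, ∀ B ∈ sizeSpan ψ s, mInner N B (A - Qs s A) = 0) →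
      1 - 2 * ((q : ℝ) - 2) / ((N : ℝ) ^ ζ - 1) ≤
        (Nat.card {ε : ({X : Finset (Fin N) // X.card = q} → Bool) //
            ∀ t : ℝ, 0 < t →
              κ * (Nprime N q : ℝ) ≤
                ∑ l ∈ Finset.range (Nprime N q + 1), (l : ℝ) *
                  (mInner N (heis (sykH q ψ ε) (ψ ⟨0, by omega⟩) t)
                    ((∑ s ∈ blockR N q l, Qs s)
                      (heis (sykH q ψ ε) (ψ ⟨0, by omega⟩) t))).re →
              b * Real.log N ≤ t} : ℝ) /
          2 ^ (Nat.card {X : Finset (Fin N) // X.card = q}) := by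
  have hα : (1 - δ) / 6 < 1 := by linarith
  obtain ⟨N₀, h_prob⟩ := Filter.eventually_atTop.1
    (syk_fast_scrambling_general ((1 - δ) / 6) γ κ 1 hα hγ hκ0)
  refine ⟨(1 - (1 - δ) / 6) / 384, by linarith, 1, one_pos, N₀ + 1, N₀.succ_pos, ?_⟩
  intro N hN hN_even q hq_even hq hqN hqN2 ψ hψ_herm hψ_anticomm Qs hQ_mem hQ_orth
  refine le_trans ?_ (h_prob N (by omega) hN_even q hq_even hq hqN ψ ⟨hψ_herm, hψ_anticomm⟩
    ⟨0, by omega⟩ Qs ⟨hQ_mem, hQ_orth⟩)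
  have hN_one : (1 : ℝ) < N := by exact_mod_cast (by omega : 1 < N)
  have hq_three : (3 : ℝ) ≤ q := by exact_mod_cast hq
  rw [Real.rpow_one, sub_le_sub_iff_left]
  exact div_le_div₀ (by linarith) (by linarith) (by linarith) (by linarith)
end
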